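/- Fix a real number γ with 1 < γ ≤ 5/3. Then there exists s₀ such that for all integers s ≥ s₀, k ≥ 2 and n with n ≥ γ·s·k − (γ−1)·s, one has m(n,k,s) ≤ C(n,k) − ((γ−1)/2)·((5k−2)/(γk−(γ−1)))·C(n−s,k), where C(a,b) denotes the binomial coefficient. -/

import Mathlib

open Finset

/-- The matching number of a family of finite sets: the maximum size of a
subfamily consisting of pairwise disjoint sets. -/
noncomputable def matchingNumber (F : Finset (Finset ℕ)) : ℕ :=
  sSup {t : ℕ | ∃ M : Finset (Finset ℕ), M ⊆ F ∧
    (M : Set (Finset ℕ)).Pairwise (fun A B => Disjoint A B) ∧ M.card = t}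

/-- `maxSizeEMC n k s` is `m(n,k,s)`: the maximum size of a family of
`k`-element subsets of an `n`-element set with no matching of size `s+1`. -/
noncomputable def maxSizeEMC (n k s : ℕ) : ℕ :=
  sSup {t : ℕ | ∃ F : Finset (Finset ℕ), F ⊆ (Finset.range n).powersetCard k ∧
    matchingNumber F ≤ s ∧ F.card = t}



def EShifted (F : Finset (Finset ℕ)) : Prop :=
  ∀ A ∈ F, ∀ i j, i < j → j ∈ A → i ∉ A → insert i (A.erase j) ∈ F

def ENoMat (F : Finset (Finset ℕ)) (s : ℕ) : Prop :=
  ¬ ∃ f : Fin (s+1) → Finset ℕ, (∀ p, f p ∈ F) ∧ ∀ p q, p ≠ q → Disjoint (f p) (f q)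

theorem e_compress_eq {i j : ℕ} (hij : i ≠ j) {A : Finset ℕ} (hj : j ∈ A) (hi : i ∉ A) :
    UV.compress {i} {j} A = insert i (A.erase j) := by
  unfold UV.compress
  rw [if_pos (by simp [hi, hj])]
  ext x
  simp
  grind

theorem e_compress_ne {i j : ℕ} {A : Finset ℕ} (h : ¬ (j ∈ A ∧ i ∉ A)) :
    UV.compress {i} {j} A = A := by
  unfold UV.compress
  rw [if_neg]
  simp
  grind

theorem e_compress_noMat {F : Finset (Finset ℕ)} {s i j : ℕ} (hij : i ≠ j) (h : ENoMat F s) :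
    ENoMat (UV.compression {i} {j} F) s := by
  rintro ⟨f, hf, hd⟩
  apply h
  by_cases hall : ∀ p, f p ∈ F
  · exact ⟨f, hall, hd⟩
  push Not at hall
  obtain ⟨p, hp⟩ := hall
  have hfp := hf p
  rw [UV.mem_compression] at hfp
  rcases hfp with ⟨h1, _⟩ | ⟨_, B, hB, hBe⟩
  · exact absurd h1 hp
  have hBc : j ∈ B ∧ i ∉ B := by
    by_contra hc
    rw [e_compress_ne hc] at hBe
    exact hp (hBe ▸ hB)
  rw [e_compress_eq hij hBc.1 hBc.2] at hBe
  have hip : i ∈ f p := by rw [← hBe]; simp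
  -- other sets do not contain i, hence lie in F
  have hoth : ∀ q, q ≠ p → i ∉ f q ∧ f q ∈ F := by
    intro q hq
    have hi : i ∉ f q := fun hi => (Finset.disjoint_left.mp (hd q p hq) hi hip)
    refine ⟨hi, ?_⟩
    have := hf q
    rw [UV.mem_compression] at this
    rcases this with ⟨h1, _⟩ | ⟨hn, C, hC, hCe⟩
    · exact h1
    · exfalso
      by_cases hc : j ∈ C ∧ i ∉ C
      · rw [e_compress_eq hij hc.1 hc.2] at hCe
        apply hi; rw [← hCe]; simp
      · rw [e_compress_ne hc] at hCe
        exact hn (hCe ▸ hC)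
  have hBsub : ∀ x ∈ B, x = j ∨ x ∈ f p := by
    intro x hx; rw [← hBe]; simp; grind
  by_cases hq : ∃ q, q ≠ p ∧ j ∈ f q
  · obtain ⟨q, hqp, hjq⟩ := hq
    have hiq := (hoth q hqp).1
    have hC : insert i ((f q).erase j) ∈ F := by
      have := hf q
      rw [UV.mem_compression, e_compress_eq hij hjq hiq] at this
      rcases this with ⟨_, h1⟩ | ⟨hn, _⟩
      · exact h1
      · exact absurd (hoth q hqp).2 hn
    refine ⟨fun r => if r = p then B else if r = q then insert i ((f q).erase j) else f r, ?_, ?_⟩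
    · intro r
      by_cases h1 : r = p
      · simp [h1, hB]
      · by_cases h2 : r = q
        · simp [h2, hqp, hC]
        · simp [h1, h2, (hoth r h1).2]
    · have key1 : ∀ r, r ≠ p → r ≠ q → Disjoint B (f r) := by
        intro r hr hrq
        rw [Finset.disjoint_left]
        intro x hx hxr
        rcases hBsub x hx with rfl | h2
        · exact Finset.disjoint_left.mp (hd q r (Ne.symm hrq)) hjq hxr
        · exact Finset.disjoint_left.mp (hd p r (Ne.symm hr)) h2 hxr
      have key2 : ∀ r, r ≠ p → r ≠ q → Disjoint (insert i ((f q).erase j)) (f r) := by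
        intro r hr hrq
        rw [Finset.disjoint_left]
        intro x hx hxr
        rcases Finset.mem_insert.mp hx with rfl | h2
        · exact (hoth r hr).1 hxr
        · exact Finset.disjoint_left.mp (hd q r (Ne.symm hrq)) (Finset.mem_of_mem_erase h2) hxr
      have key3 : Disjoint B (insert i ((f q).erase j)) := by
        rw [Finset.disjoint_left]
        intro x hx hxr
        rcases Finset.mem_insert.mp hxr with rfl | h2
        · exact hBc.2 hx
        · rcases hBsub x hx with rfl | h3
          · simp at h2
          · exact Finset.disjoint_left.mp (hd p q (Ne.symm hqp)) h3 (Finset.mem_of_mem_erase h2)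
      intro a b hab
      dsimp only
      by_cases ha : a = p
      · rw [if_pos ha]
        have hb : b ≠ p := fun hb => hab (ha.trans hb.symm)
        rw [if_neg hb]
        by_cases hb2 : b = q
        · rw [if_pos hb2]; exact key3
        · rw [if_neg hb2]; exact key1 b hb hb2
      · rw [if_neg ha]
        by_cases hb : b = p
        · rw [if_pos hb]
          by_cases ha2 : a = q
          · rw [if_pos ha2]; exact key3.symm
          · rw [if_neg ha2]; exact (key1 a ha ha2).symm
        · rw [if_neg hb]
          by_cases ha2 : a = q
          · have hb2 : b ≠ q := fun hb2 => hab (ha2.trans hb2.symm)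
            rw [if_pos ha2, if_neg hb2]; exact key2 b hb hb2
          · rw [if_neg ha2]
            by_cases hb2 : b = q
            · rw [if_pos hb2]; exact (key2 a ha ha2).symm
            · rw [if_neg hb2]; exact hd a b hab
  · push Not at hq
    refine ⟨fun r => if r = p then B else f r, ?_, ?_⟩
    · intro r
      by_cases h1 : r = p
      · simp [h1, hB]
      · simp [h1, (hoth r h1).2]
    · have key1 : ∀ r, r ≠ p → Disjoint B (f r) := by
        intro r hr
        rw [Finset.disjoint_left]
        intro x hx hxr
        rcases hBsub x hx with rfl | h2
        · exact hq r hr hxr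
        · exact Finset.disjoint_left.mp (hd p r (Ne.symm hr)) h2 hxr
      intro a b hab
      by_cases ha : a = p <;> by_cases hb : b = p <;> simp [ha, hb]
      · exact absurd (ha.trans hb.symm) hab
      · exact key1 b hb
      · exact (key1 a ha).symm
      · exact hd a b hab

theorem e_compress_sub {n k i j : ℕ} (hij : i < j) {F : Finset (Finset ℕ)}
    (hF : F ⊆ (range n).powersetCard k) :
    UV.compression {i} {j} F ⊆ (range n).powersetCard k := by
  intro A hA
  rw [UV.mem_compression] at hA
  rcases hA with ⟨h1, _⟩ | ⟨_, B, hB, rfl⟩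
  · exact hF h1
  · have := hF hB
    by_cases hc : j ∈ B ∧ i ∉ B
    · rw [e_compress_eq hij.ne hc.1 hc.2]
      rw [mem_powersetCard] at this ⊢
      constructor
      · intro x hx
        rcases Finset.mem_insert.mp hx with rfl | h2
        · have := this.1 hc.1
          simp at this ⊢; omega
        · exact this.1 (Finset.mem_of_mem_erase h2)
      · rw [card_insert_of_notMem (by simp [hc.2]), card_erase_of_mem hc.1]
        have : 0 < #B := card_pos.mpr ⟨_, hc.1⟩
        omega
    · rw [e_compress_ne hc]; exact this

def eWt (F : Finset (Finset ℕ)) : ℕ := ∑ A ∈ F, ∑ x ∈ A, x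

theorem e_compress_wt {i j : ℕ} (hij : i < j) {F : Finset (Finset ℕ)}
    {A : Finset ℕ} (hA : A ∈ F) (hj : j ∈ A) (hi : i ∉ A) (hn : insert i (A.erase j) ∉ F) :
    eWt (UV.compression {i} {j} F) < eWt F := by
  unfold eWt
  have hle : ∀ B : Finset ℕ, ∑ x ∈ UV.compress {i} {j} B, x ≤ ∑ x ∈ B, x := by
    intro B
    by_cases hc : j ∈ B ∧ i ∉ B
    · rw [e_compress_eq hij.ne hc.1 hc.2, sum_insert (by simp [hc.2]), ← Finset.add_sum_erase _ _ hc.1]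
      omega
    · rw [e_compress_ne hc]
  have hlt : ∑ x ∈ UV.compress {i} {j} A, x < ∑ x ∈ A, x := by
    rw [e_compress_eq hij.ne hj hi, sum_insert (by simp [hi]), ← Finset.add_sum_erase _ _ hj]
    omega
  unfold UV.compression
  rw [sum_union (UV.compress_disjoint)]
  rw [filter_image]
  rw [sum_image]
  · rw [← Finset.sum_filter_add_sum_filter_not F (fun a => UV.compress {i} {j} a ∈ F) (fun A => ∑ x ∈ A, x)]
    apply Nat.add_lt_add_left
    apply Finset.sum_lt_sum
    · intro B _; exact hle B
    · exact ⟨A, by simp [hA, e_compress_eq hij.ne hj hi, hn], hlt⟩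
  · exact UV.compress_injOn

theorem e_exists_shifted {n k s : ℕ} (F : Finset (Finset ℕ)) (hF : F ⊆ (range n).powersetCard k)
    (h : ENoMat F s) : ∃ F' : Finset (Finset ℕ), F' ⊆ (range n).powersetCard k ∧ ENoMat F' s ∧
      #F' = #F ∧ EShifted F' := by
  induction hw : eWt F using Nat.strong_induction_on generalizing F with
  | _ w ih =>
    by_cases hs : EShifted F
    · exact ⟨F, hF, h, rfl, hs⟩
    · unfold EShifted at hs
      push Not at hs
      obtain ⟨A, hA, i, j, hij, hj, hi, hn⟩ := hs
      obtain ⟨F', h1, h2, h3, h4⟩ := ih _ (hw ▸ e_compress_wt hij hA hj hi hn)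
        (UV.compression {i} {j} F) (e_compress_sub hij hF) (e_compress_noMat hij.ne h) rfl
      exact ⟨F', h1, h2, by rw [h3, UV.card_compression], h4⟩



def eCnt (A : Finset ℕ) (m : ℕ) : ℕ := #(A.filter (· < m))

theorem eCnt_mono (A : Finset ℕ) {m m' : ℕ} (h : m ≤ m') : eCnt A m ≤ eCnt A m' := by
  apply card_le_card
  intro x hx
  simp at hx ⊢
  exact ⟨hx.1, by omega⟩

theorem eCnt_le (A : Finset ℕ) (m : ℕ) : eCnt A m ≤ #A := card_filter_le _ _

theorem e_dom {F : Finset (Finset ℕ)} (hF : EShifted F) : ∀ (d : ℕ) (A B : Finset ℕ),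
    #(A \ B) = d → A ∈ F → #A = #B → (∀ m, eCnt A m ≤ eCnt B m) → B ∈ F := by
  intro d
  induction d with
  | zero =>
    intro A B hd hA hc _
    have : A ⊆ B := by
      rw [card_eq_zero, sdiff_eq_empty_iff_subset] at hd; exact hd
    rw [← eq_of_subset_of_card_le this hc.ge]; exact hA
  | succ d ih =>
    intro A B hd hA hc hdom
    have hne : (A \ B).Nonempty := by rw [← card_pos]; omega
    have hne2 : (B \ A).Nonempty := by
      rw [← card_pos]
      have h1 := card_sdiff_add_card_inter A B
      have h2 := card_sdiff_add_card_inter B A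
      rw [inter_comm] at h2
      omega
    set j := (A \ B).min' hne with hj
    set i := (B \ A).min' hne2 with hi
    have hjm : j ∈ A \ B := min'_mem _ _
    have him : i ∈ B \ A := min'_mem _ _
    have hjmin : ∀ x ∈ A, x < j → x ∈ B := by
      intro x hx hlt
      by_contra hb
      have := min'_le (A \ B) x (by simp [hx, hb])
      omega
    have himin : ∀ x ∈ B, x < i → x ∈ A := by
      intro x hx hlt
      by_contra hb
      have := min'_le (B \ A) x (by simp [hx, hb])
      omega
    clear_value i j
    rw [mem_sdiff] at hjm him
    have hij : i < j := by
      by_contra hlt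
      have hne : j ≠ i := fun h => hjm.2 (h ▸ him.1)
      have hlt : j < i := by omega
      have : eCnt B (j+1) < eCnt A (j+1) := by
        apply card_lt_card
        rw [ssubset_iff_of_subset]
        · exact ⟨j, by simp [hjm.1], by simp [hjm.2]⟩
        · intro x hx
          simp at hx ⊢
          exact ⟨himin x hx.1 (by omega), hx.2⟩
      have := hdom (j+1)
      omega
    apply ih (insert i (A.erase j)) B
    · have : insert i (A.erase j) \ B = (A \ B).erase j := by
        ext x; simp; grind
      rw [this, card_erase_of_mem (by simp [hjm]), hd]; omega
    · exact hF A hA i j hij hjm.1 him.2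
    · rw [card_insert_of_notMem (by simp [him.2]), card_erase_of_mem hjm.1, ← hc]
      have : 0 < #A := card_pos.mpr ⟨_, hjm.1⟩
      omega
    · intro m
      by_cases h1 : m ≤ i
      · refine le_trans (card_le_card ?_) (hdom m)
        intro x hx; simp at hx ⊢; grind
      · by_cases h2 : m ≤ j
        · apply card_le_card
          intro x hx; simp at hx ⊢; grind
        · refine le_trans ?_ (hdom m)
          have : (insert i (A.erase j)).filter (· < m) = insert i ((A.filter (· < m)).erase j) := by
            ext x; simp; grind
          unfold eCnt
          rw [this, card_insert_of_notMem (by simp [him.2]), card_erase_of_mem (by simp [hjm.1]; omega)]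
          have : 0 < #(A.filter (· < m)) := card_pos.mpr ⟨j, by simp [hjm.1]; omega⟩
          omega

theorem e_ballot {F : Finset (Finset ℕ)} {k s : ℕ} (hF : EShifted F) (hk : ∀ A ∈ F, #A = k)
    (hN : ENoMat F s) (A : Finset ℕ) (hA : A ∈ F) :
    ∃ i, 1 ≤ i ∧ i ≤ k ∧ i ≤ eCnt A (i * (s+1) - 1) := by
  by_contra hcon
  push Not at hcon
  apply hN
  have hinj : ∀ j, Function.Injective (fun q : ℕ => q * (s+1) + j) := by
    intro j a b hab
    simp at hab
    exact hab
  refine ⟨fun j => (range k).image (fun q => q * (s+1) + (j : ℕ)), ?_, ?_⟩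
  · intro j
    apply e_dom hF _ A _ rfl hA
    · rw [hk A hA, card_image_of_injective _ (hinj _), card_range]
    · intro m
      have h1 : min k (m / (s+1)) ≤ eCnt ((range k).image (fun q => q * (s+1) + (j : ℕ))) m := by
        calc min k (m / (s+1)) = #((range (min k (m / (s+1)))).image (fun q => q * (s+1) + (j : ℕ))) := by
              rw [card_image_of_injective _ (hinj _), card_range]
          _ ≤ _ := by
            apply card_le_card
            intro x hx
            simp only [mem_image, mem_range, mem_filter] at hx ⊢
            obtain ⟨q, hq, rfl⟩ := hx
            rw [lt_min_iff] at hq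
            refine ⟨⟨q, hq.1, rfl⟩, ?_⟩
            have h2 : q + 1 ≤ m / (s+1) := hq.2
            have h3 := (Nat.le_div_iff_mul_le (Nat.succ_pos s)).mp h2
            have := j.2
            nlinarith
      refine le_trans ?_ h1
      have h0 : eCnt A m ≤ k := (eCnt_le A m).trans (hk A hA).le
      by_cases hi : m / (s+1) + 1 ≤ k
      · have h2 := hcon (m / (s+1) + 1) (Nat.le_add_left 1 _) hi
        have h3 : m < (m / (s+1) + 1) * (s+1) := Nat.lt_mul_of_div_lt (Nat.lt_succ_self _) (Nat.succ_pos s)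
        have := eCnt_mono A (show m ≤ (m / (s+1) + 1) * (s+1) - 1 by omega)
        exact le_min h0 (by omega)
      · exact le_min h0 (by omega)
  · intro p q hpq
    rw [disjoint_left]
    intro x hx hy
    simp only [mem_image, mem_range] at hx hy
    obtain ⟨a, _, rfl⟩ := hx
    obtain ⟨b, _, hb⟩ := hy
    apply hpq
    ext
    have h1 : (b * (s+1) + (q:ℕ)) % (s+1) = q := by
      rw [Nat.mul_add_mod', Nat.mod_eq_of_lt q.2]
    have h2 : (a * (s+1) + (p:ℕ)) % (s+1) = p := by
      rw [Nat.mul_add_mod', Nat.mod_eq_of_lt p.2]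
    rw [← h1, ← h2, hb]

theorem e_lemK {l : ℕ} (G S : Finset (Finset ℕ)) (m : ℕ → ℕ) (c : ℝ) (hc0 : 0 ≤ c)
    (hG : ∀ E ∈ G, #E = l ∧ ∃ i, 1 ≤ i ∧ i ≤ l ∧ i ≤ eCnt E (m i)) (hm : Monotone m)
    (hS : ∀ E ∈ G, ∀ x ∈ E, E.erase x ∈ S)
    (hc : ∀ i : ℕ, 1 ≤ i → i ≤ l → (m i : ℝ) - (i - 1) ≤ c * i) :
    (#G : ℝ) ≤ c * #S := by
  classical
  let ι : Finset ℕ → ℕ := fun E => Nat.findGreatest (fun j => j ≤ eCnt E (m j)) l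
  let ι' : Finset ℕ → ℕ := fun E => Nat.findGreatest (fun j => j ≤ eCnt E (m j) + 1) l
  have hι1 : ∀ E ∈ G, 1 ≤ ι E ∧ ι E ≤ l ∧ eCnt E (m (ι E)) = ι E := by
    intro E hE
    obtain ⟨hcard, i, h1, h2, h3⟩ := hG E hE
    have h4 : i ≤ ι E := Nat.le_findGreatest h2 h3
    have h5 : ι E ≤ l := Nat.findGreatest_le l
    have h6 : ι E ≤ eCnt E (m (ι E)) :=
      Nat.findGreatest_spec (P := fun j => j ≤ eCnt E (m j)) h2 h3
    refine ⟨by omega, h5, le_antisymm ?_ h6⟩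
    by_contra hlt
    have h7 : ι E + 1 ≤ eCnt E (m (ι E + 1)) := by
      have := eCnt_mono E (hm (Nat.le_succ (ι E)))
      simp only [Nat.succ_eq_add_one] at this
      omega
    have h8 : ι E + 1 ≤ l := h7.trans ((eCnt_le _ _).trans hcard.le)
    have : ι E + 1 ≤ ι E := Nat.le_findGreatest h8 h7
    omega
  have herase : ∀ E : Finset ℕ, ∀ x ∈ E, ∀ j, x < j → eCnt (E.erase x) j + 1 = eCnt E j := by
    intro E x hx j hj
    unfold eCnt
    have : (E.erase x).filter (· < j) = (E.filter (· < j)).erase x := by ext y; simp; grind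
    rw [this]
    rw [card_erase_add_one]
    simp [hx, hj]
  have hι2 : ∀ E ∈ G, ∀ x ∈ E, x < m (ι E) → ι' (E.erase x) = ι E := by
    intro E hE x hx hlt
    obtain ⟨h1, h2, h3⟩ := hι1 E hE
    have h4 : ι E ≤ ι' (E.erase x) := by
      apply Nat.le_findGreatest h2
      rw [herase E x hx _ hlt, h3]
    apply le_antisymm _ h4
    have h5 : ι' (E.erase x) ≤ l := Nat.findGreatest_le l
    apply Nat.le_findGreatest h5
    have h6 : ι' (E.erase x) ≤ eCnt (E.erase x) (m (ι' (E.erase x))) + 1 :=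
      Nat.findGreatest_spec (P := fun j => j ≤ eCnt (E.erase x) (m j) + 1) h2
        (by rw [herase E x hx _ hlt, h3])
    rwa [herase E x hx _ (lt_of_lt_of_le hlt (hm h4))] at h6
  let R : Finset ℕ → Finset ℕ → Prop := fun E E' => ∃ x ∈ E, x < m (ι E) ∧ E' = E.erase x
  have hcard1 : ∀ E ∈ G, #(S.filter (R E)) = ι E := by
    intro E hE
    have : S.filter (R E) = (E.filter (· < m (ι E))).image (fun x => E.erase x) := by
      ext E'
      simp only [mem_filter, mem_image, R]
      constructor
      · rintro ⟨_, x, h1, h2, rfl⟩; exact ⟨x, ⟨h1, h2⟩, rfl⟩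
      · rintro ⟨x, ⟨h1, h2⟩, rfl⟩; exact ⟨hS E hE x h1, x, h1, h2, rfl⟩
    rw [this, card_image_of_injOn]
    · exact (hι1 E hE).2.2
    · intro x hx y hy hxy
      simp at hx hy hxy
      by_contra hne
      have : y ∈ E.erase x := by simp [hy.1, Ne.symm hne]
      rw [hxy] at this
      simp at this
  have hcard2 : ∀ E' ∈ S, ((#(G.filter (fun E => R E E')) : ℕ) : ℝ) ≤ c * ι' E' := by
    intro E' _
    by_cases hne : (G.filter (fun E => R E E')).Nonempty
    · obtain ⟨E, hE⟩ := hne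
      simp only [mem_filter, R] at hE
      obtain ⟨hE, x, hx, hlt, rfl⟩ := hE
      have h1 := hι1 E hE
      have h2 := hι2 E hE x hx hlt
      have h3 := herase E x hx _ hlt
      refine le_trans ?_ (h2 ▸ hc (ι E) h1.1 h1.2.1)
      have hsub : G.filter (fun E1 => R E1 (E.erase x)) ⊆
          ((range (m (ι E))) \ ((E.erase x).filter (· < m (ι E)))).image (fun y => insert y (E.erase x)) := by
        intro E1 hE1
        simp only [mem_filter, R] at hE1
        obtain ⟨hE1, y, hy, hylt, he⟩ := hE1
        have h4 := hι2 E1 hE1 y hy hylt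
        rw [← he, h2] at h4
        simp only [mem_image, mem_sdiff, mem_range, mem_filter]
        refine ⟨y, ⟨h4 ▸ hylt, ?_⟩, ?_⟩
        · rw [he]; simp
        · rw [he, insert_erase hy]
      have h5 := (card_le_card hsub).trans card_image_le
      rw [card_sdiff_of_subset (by intro z hz; simp at hz ⊢; exact hz.2), card_range] at h5
      change _ ≤ m (ι E) - eCnt (E.erase x) (m (ι E)) at h5
      have h6 : eCnt (E.erase x) (m (ι E)) = ι E - 1 := by omega
      have h7 : eCnt (E.erase x) (m (ι E)) ≤ m (ι E) := by
        calc _ ≤ #(range (m (ι E))) := card_le_card (by intro z hz; simp at hz ⊢; exact hz.2)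
          _ = _ := card_range _
      have h8 : (#(G.filter (fun E1 => R E1 (E.erase x)))) + (ι E - 1) ≤ m (ι E) := by omega
      have h9 : ((#(G.filter (fun E1 => R E1 (E.erase x))) : ℕ) : ℝ) + ((ι E : ℝ) - 1) ≤ m (ι E) := by
        have : ((ι E - 1 : ℕ) : ℝ) = (ι E : ℝ) - 1 := by
          rw [Nat.cast_sub h1.1]; simp
        rw [← this]; exact_mod_cast h8
      rw [h2]
      linarith
    · rw [not_nonempty_iff_eq_empty] at hne
      rw [hne]; simp; positivity
  calc (#G : ℝ) = ∑ E ∈ G, (1:ℝ) := by simp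
    _ = ∑ E ∈ G, ∑ E' ∈ S, if R E E' then (1 / (ι' E') : ℝ) else 0 := by
        apply sum_congr rfl
        intro E hE
        have h0 := hι1 E hE
        rw [← sum_filter]
        have : ∑ E' ∈ S.filter (R E), (1 / (ι' E') : ℝ) = ∑ E' ∈ S.filter (R E), (1 / (ι E) : ℝ) := by
          apply sum_congr rfl
          intro E' hE'
          simp only [mem_filter, R] at hE'
          obtain ⟨_, x, hx, hlt, rfl⟩ := hE'
          rw [hι2 E hE x hx hlt]
        rw [this, sum_const, hcard1 E hE, nsmul_eq_mul]
        have : (ι E : ℝ) ≠ 0 := by have := h0.1; positivity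
        field_simp
    _ = ∑ E' ∈ S, ∑ E ∈ G, if R E E' then (1 / (ι' E') : ℝ) else 0 := sum_comm
    _ ≤ ∑ E' ∈ S, c := by
        apply sum_le_sum
        intro E' hE'
        rw [← sum_filter, sum_const, nsmul_eq_mul]
        have := hcard2 E' hE'
        by_cases h0 : ι' E' = 0
        · rw [h0]; simp; exact hc0
        · have : (0:ℝ) < ι' E' := by positivity
          rw [mul_one_div, div_le_iff₀ this]
          assumption
    _ = c * #S := by simp [mul_comm]


def eD (G H : Finset (Finset ℕ)) : ℝ := ∑ A ∈ G, ∑ B ∈ H, if Disjoint A B then (1:ℝ) else 0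

def eG0 (N : ℕ) (G : Finset (Finset ℕ)) : Finset (Finset ℕ) := G.filter (N ∉ ·)
def eG1 (N : ℕ) (G : Finset (Finset ℕ)) : Finset (Finset ℕ) := (G.filter (N ∈ ·)).image (fun A => A.erase N)

theorem eG1_mem {N : ℕ} {G : Finset (Finset ℕ)} {E : Finset ℕ} :
    E ∈ eG1 N G ↔ N ∉ E ∧ insert N E ∈ G := by
  unfold eG1
  simp only [mem_image, mem_filter]
  constructor
  · rintro ⟨A, ⟨h1, h2⟩, rfl⟩
    exact ⟨by simp, by rwa [insert_erase h2]⟩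
  · rintro ⟨h1, h2⟩
    exact ⟨insert N E, ⟨h2, by simp⟩, erase_insert h1⟩

theorem e_split (N : ℕ) (G : Finset (Finset ℕ)) (f : Finset ℕ → ℝ) :
    ∑ A ∈ G, f A = ∑ A ∈ eG0 N G, f A + ∑ E ∈ eG1 N G, f (insert N E) := by
  rw [← sum_filter_add_sum_filter_not G (fun A => N ∉ A)]
  congr 1
  unfold eG1
  rw [sum_image]
  · simp only [not_not]
    apply sum_congr rfl
    intro A hA
    simp at hA
    rw [insert_erase hA.2]
  · intro A hA B hB h
    simp at hA hB
    have := congrArg (insert N) h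
    simpa [insert_erase hA.2, insert_erase hB.2] using this

theorem eG0_sub {N l : ℕ} {G : Finset (Finset ℕ)} (hG : G ⊆ (range (N+1)).powersetCard l) :
    eG0 N G ⊆ (range N).powersetCard l := by
  intro A hA
  simp only [eG0, mem_filter] at hA
  have := hG hA.1
  rw [mem_powersetCard] at this ⊢
  refine ⟨?_, this.2⟩
  intro x hx
  have h1 := this.1 hx
  simp at h1 ⊢
  have : x ≠ N := fun h => hA.2 (h ▸ hx)
  omega

theorem eG1_sub {N l : ℕ} {G : Finset (Finset ℕ)} (hG : G ⊆ (range (N+1)).powersetCard (l+1)) :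
    eG1 N G ⊆ (range N).powersetCard l := by
  intro A hA
  rw [eG1_mem] at hA
  have := hG hA.2
  rw [mem_powersetCard, card_insert_of_notMem hA.1] at this
  rw [mem_powersetCard]
  refine ⟨?_, by omega⟩
  intro x hx
  have h1 := this.1 (mem_insert_of_mem hx)
  simp at h1 ⊢
  have : x ≠ N := fun h => hA.1 (h ▸ hx)
  omega

theorem eG0_shifted {N l : ℕ} {G : Finset (Finset ℕ)} (hG : G ⊆ (range (N+1)).powersetCard l)
    (hs : EShifted G) : EShifted (eG0 N G) := by
  intro A hA i j hij hj hi
  have hsub := (mem_powersetCard.mp (eG0_sub hG hA)).1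
  have hj' := hsub hj
  simp at hj'
  simp only [eG0, mem_filter] at hA ⊢
  refine ⟨hs A hA.1 i j hij hj hi, ?_⟩
  simp
  constructor
  · omega
  · intro _; exact hA.2

theorem eG1_shifted {N l : ℕ} {G : Finset (Finset ℕ)} (hG : G ⊆ (range (N+1)).powersetCard (l+1))
    (hs : EShifted G) : EShifted (eG1 N G) := by
  intro A hA i j hij hj hi
  have hsub := (mem_powersetCard.mp (eG1_sub hG hA)).1
  have hj' := hsub hj
  simp at hj'
  rw [eG1_mem] at hA ⊢
  constructor
  · simp
    constructor
    · omega
    · intro _; exact hA.1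
  · have := hs _ hA.2 i j hij (by simp [hj]) (by simp [hi]; omega)
    convert this using 1
    ext x; simp; grind

/-- generic double counting: local LYM type inequality -/
theorem e_dc {N l : ℕ} (G0 G1 : Finset (Finset ℕ)) (h0 : G0 ⊆ (range N).powersetCard (l+1))
    (h1 : G1 ⊆ (range N).powersetCard l)
    (h : ∀ E ∈ G1, ∀ x < N, x ∉ E → insert x E ∈ G0) : #G1 * (N - l) ≤ #G0 * (l+1) := by
  classical
  refine card_mul_le_card_mul (fun (E A : Finset ℕ) => E ⊆ A) ?_ ?_
  · intro E hE
    have hE' := mem_powersetCard.mp (h1 hE)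
    have : ((range N) \ E).image (fun x => insert x E) ⊆ bipartiteAbove (fun (E A : Finset ℕ) => E ⊆ A) G0 E := by
      intro A hA
      simp only [mem_image, mem_sdiff, mem_range] at hA
      obtain ⟨x, ⟨hx, hxE⟩, rfl⟩ := hA
      simp only [bipartiteAbove, mem_filter]
      exact ⟨h E hE x hx hxE, subset_insert _ _⟩
    refine le_trans ?_ (card_le_card this)
    rw [card_image_of_injOn]
    · rw [card_sdiff_of_subset hE'.1, card_range, hE'.2]
    · intro x hx y hy hxy
      simp at hx hy hxy
      have : x ∈ insert y E := by rw [← hxy]; simp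
      simp [hx.2] at this
      exact this
  · intro A hA
    have hA' := mem_powersetCard.mp (h0 hA)
    have : bipartiteBelow (fun (E A : Finset ℕ) => E ⊆ A) G1 A ⊆ A.powersetCard l := by
      intro E hE
      simp only [bipartiteBelow, mem_filter] at hE
      rw [mem_powersetCard]
      exact ⟨hE.2, (mem_powersetCard.mp (h1 hE.1)).2⟩
    refine (card_le_card this).trans ?_
    rw [card_powersetCard, hA'.2]
    simp

theorem e_dens {N l : ℕ} (hl : l + 1 ≤ N) {G : Finset (Finset ℕ)}
    (hG : G ⊆ (range (N+1)).powersetCard (l+1)) (hs : EShifted G) :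
    (#(eG1 N G) : ℝ) / N.choose l ≤ (#(eG0 N G) : ℝ) / N.choose (l+1) := by
  have h := e_dc (eG0 N G) (eG1 N G) (eG0_sub hG) (eG1_sub hG) (by
    intro E hE x hx hxE
    rw [eG1_mem] at hE
    simp only [eG0, mem_filter]
    have := hs _ hE.2 x N hx (by simp) (by simp [hxE]; omega)
    rw [erase_insert hE.1] at this
    refine ⟨this, ?_⟩
    simp [hE.1]; omega)
  have hc := Nat.choose_succ_right_eq N l
  have p1 : (0:ℝ) < N.choose l := by exact_mod_cast Nat.choose_pos (by omega)
  have p2 : (0:ℝ) < N.choose (l+1) := by exact_mod_cast Nat.choose_pos (by omega)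
  rw [div_le_div_iff₀ p1 p2]
  have hlt : 0 < N - l := by omega
  have : #(eG1 N G) * N.choose (l+1) * (l+1) ≤ #(eG0 N G) * N.choose l * (l+1) := by
    calc #(eG1 N G) * N.choose (l+1) * (l+1) = #(eG1 N G) * (N - l) * N.choose l := by
          rw [mul_assoc, hc]; ring
      _ ≤ #(eG0 N G) * (l+1) * N.choose l := Nat.mul_le_mul_right _ h
      _ = _ := by ring
  exact_mod_cast Nat.le_of_mul_le_mul_right this (Nat.succ_pos l)

theorem eD_split (N : ℕ) (G H : Finset (Finset ℕ)) :
    eD G H = eD (eG0 N G) (eG0 N H) + eD (eG1 N G) (eG0 N H) + eD (eG0 N G) (eG1 N H) := by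
  unfold eD
  rw [e_split N G]
  have h1 : ∀ A ∈ eG0 N G, (∑ B ∈ H, if Disjoint A B then (1:ℝ) else 0) =
      (∑ B ∈ eG0 N H, if Disjoint A B then (1:ℝ) else 0) + ∑ B ∈ eG1 N H, if Disjoint A B then (1:ℝ) else 0 := by
    intro A hA
    rw [e_split N H]
    congr 1
    apply sum_congr rfl
    intro B hB
    simp only [eG0, mem_filter] at hA
    simp [hA.2]
  have h2 : ∀ A ∈ eG1 N G, (∑ B ∈ H, if Disjoint (insert N A) B then (1:ℝ) else 0) =
      (∑ B ∈ eG0 N H, if Disjoint A B then (1:ℝ) else 0) := by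
    intro A hA
    rw [e_split N H]
    have : ∑ B ∈ eG1 N H, (if Disjoint (insert N A) (insert N B) then (1:ℝ) else 0) = 0 := by
      apply sum_eq_zero
      intro B _
      simp
    rw [this, add_zero]
    apply sum_congr rfl
    intro B hB
    simp only [eG0, mem_filter] at hB
    simp [hB.2]
  rw [sum_congr rfl h1, sum_congr rfl h2, sum_add_distrib]
  ring

theorem e_corr : ∀ (N l m : ℕ) (G H : Finset (Finset ℕ)), G ⊆ (range N).powersetCard l →
    H ⊆ (range N).powersetCard m → EShifted G → EShifted H →
    eD G H ≤ (#G : ℝ) / N.choose l * ((#H : ℝ) / N.choose m) * (N.choose l * (N - l).choose m : ℕ) := by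
  have htriv : ∀ G H, eD G H ≤ (#G : ℝ) * #H := by
    intro G H
    unfold eD
    calc _ ≤ ∑ A ∈ G, ∑ B ∈ H, (1:ℝ) := by
          apply sum_le_sum; intro A _; apply sum_le_sum; intro B _; split_ifs <;> norm_num
      _ = _ := by simp
  have hzero : ∀ (N l m : ℕ) (G H : Finset (Finset ℕ)), G ⊆ (range N).powersetCard l →
    H ⊆ (range N).powersetCard m → N < l + m → eD G H = 0 := by
    intro N l m G H hG hH hlt
    unfold eD
    apply sum_eq_zero; intro A hA; apply sum_eq_zero; intro B hB
    rw [if_neg]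
    intro hd
    have h1 := mem_powersetCard.mp (hG hA)
    have h2 := mem_powersetCard.mp (hH hB)
    have h3 := card_le_card (union_subset h1.1 h2.1)
    rw [card_union_of_disjoint hd, card_range] at h3
    omega
  intro N
  induction N with
  | zero =>
    intro l m G H hG hH _ _
    by_cases h : 0 < l + m
    · rw [hzero 0 l m G H hG hH h]; positivity
    · obtain ⟨rfl, rfl⟩ : l = 0 ∧ m = 0 := by omega
      have := htriv G H
      simpa using this
  | succ N ih =>
    intro l m G H hG hH hGs hHs
    by_cases hlm : N + 1 < l + m
    · rw [hzero _ l m G H hG hH hlm]; positivity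
    rcases l with _ | l
    · refine (htriv G H).trans (le_of_eq ?_)
      have : ((N+1).choose m : ℝ) ≠ 0 := by
        have := Nat.choose_pos (n := N+1) (k := m) (by omega)
        positivity
      simp
      field_simp
    rcases m with _ | m
    · refine (htriv G H).trans (le_of_eq ?_)
      have : ((N+1).choose (l+1) : ℝ) ≠ 0 := by
        have := Nat.choose_pos (n := N+1) (k := l+1) (by omega)
        positivity
      simp only [Nat.choose_zero_right]
      field_simp
      push_cast
      ring
    have hdG := e_dens (by omega) hG hGs
    have hdH := e_dens (by omega) hH hHs
    have i00 := ih (l+1) (m+1) _ _ (eG0_sub hG) (eG0_sub hH) (eG0_shifted hG hGs) (eG0_shifted hH hHs)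
    have i10 := ih l (m+1) _ _ (eG1_sub hG) (eG0_sub hH) (eG1_shifted hG hGs) (eG0_shifted hH hHs)
    have i01 := ih (l+1) m _ _ (eG0_sub hG) (eG1_sub hH) (eG0_shifted hG hGs) (eG1_shifted hH hHs)
    rw [eD_split N G H]
    have cG : (#G : ℝ) = #(eG0 N G) + #(eG1 N G) := by
      have := e_split N G (fun _ => 1)
      simpa using this
    have cH : (#H : ℝ) = #(eG0 N H) + #(eG1 N H) := by
      have := e_split N H (fun _ => 1)
      simpa using this
    obtain ⟨M, hM⟩ : ∃ M, N = l + 1 + M := ⟨N - (l+1), by omega⟩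
    have pos : ∀ r, r ≤ N → (0:ℝ) < N.choose r := fun r hr => by exact_mod_cast Nat.choose_pos hr
    have q1 := pos l (by omega)
    have q2 := pos (l+1) (by omega)
    have q3 := pos m (by omega)
    have q4 := pos (m+1) (by omega)
    have pos' : ∀ r, r ≤ N + 1 → (0:ℝ) < (N+1).choose r := fun r hr => by exact_mod_cast Nat.choose_pos hr
    have q5 := pos' (l+1) (by omega)
    have q6 := pos' (m+1) (by omega)
    set T : ℝ := (((N+1).choose (l+1) * (N + 1 - (l+1)).choose (m+1) : ℕ) : ℝ) with hT
    have hN : (0:ℝ) < N + 1 := by positivity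
    have t10 : ((N.choose l * (N - l).choose (m+1) : ℕ) : ℝ) = T * ((l+1) / (N+1)) := by
      have h1 := Nat.add_one_mul_choose_eq N l
      rw [hT, show N + 1 - (l+1) = N - l by omega]
      field_simp
      have : (N.choose l * (N - l).choose (m+1)) * (N+1) = ((N+1).choose (l+1) * (N-l).choose (m+1)) * (l+1) := by
        calc _ = ((N+1) * N.choose l) * (N - l).choose (m+1) := by ring
          _ = _ := by rw [h1]; ring
      exact_mod_cast this
    have t01 : ((N.choose (l+1) * (N - (l+1)).choose m : ℕ) : ℝ) = T * ((m+1) / (N+1)) := by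
      have h1 := Nat.choose_mul_succ_eq N (l+1)
      rw [hT, show N + 1 - (l+1) = M + 1 by omega, show N - (l+1) = M by omega]
      rw [show N + 1 - (l+1) = M + 1 by omega] at h1
      have h2 := Nat.add_one_mul_choose_eq M m
      field_simp
      have : (N.choose (l+1) * M.choose m) * (N+1) = ((N+1).choose (l+1) * (M+1).choose (m+1)) * (m+1) := by
        calc _ = (N.choose (l+1) * (N+1)) * M.choose m := by ring
          _ = (N+1).choose (l+1) * ((M+1) * M.choose m) := by rw [h1]; ring
          _ = _ := by rw [h2]; ring
      exact_mod_cast this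
    have t00 : ((N.choose (l+1) * (N - (l+1)).choose (m+1) : ℕ) : ℝ) = T * (1 - (l+1) / (N+1) - (m+1) / (N+1)) := by
      have : T = ((N.choose l * (N - l).choose (m+1) : ℕ) : ℝ) + ((N.choose (l+1) * (N - (l+1)).choose m : ℕ) : ℝ)
          + ((N.choose (l+1) * (N - (l+1)).choose (m+1) : ℕ) : ℝ) := by
        rw [hT, show N + 1 - (l+1) = M + 1 by omega, show N - (l+1) = M by omega, show N - l = M+1 by omega,
          Nat.choose_succ_succ N l, Nat.choose_succ_succ M m]
        push_cast
        ring
      rw [t10, t01] at this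
      linarith
    have r1 : (N.choose l : ℝ) = (N+1).choose (l+1) * ((l+1) / (N+1)) := by
      have h1 := Nat.add_one_mul_choose_eq N l
      field_simp
      rw [mul_comm]
      exact_mod_cast h1
    have r2 : (N.choose (l+1) : ℝ) = (N+1).choose (l+1) * (1 - (l+1) / (N+1)) := by
      have h1 := Nat.choose_succ_succ N l
      have : ((N+1).choose (l+1) : ℝ) = N.choose l + N.choose (l+1) := by exact_mod_cast h1
      rw [r1] at this; linarith
    have r3 : (N.choose m : ℝ) = (N+1).choose (m+1) * ((m+1) / (N+1)) := by
      have h1 := Nat.add_one_mul_choose_eq N m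
      field_simp
      rw [mul_comm]
      exact_mod_cast h1
    have r4 : (N.choose (m+1) : ℝ) = (N+1).choose (m+1) * (1 - (m+1) / (N+1)) := by
      have h1 := Nat.choose_succ_succ N m
      have : ((N+1).choose (m+1) : ℝ) = N.choose m + N.choose (m+1) := by exact_mod_cast h1
      rw [r3] at this; linarith
    rw [t00] at i00
    rw [t10] at i10
    rw [t01] at i01
    set p1 : ℝ := (l+1) / (N+1) with hp1
    set p2 : ℝ := (m+1) / (N+1) with hp2
    set g0 := (#(eG0 N G) : ℝ) / N.choose (l+1) with hg0
    set g1 := (#(eG1 N G) : ℝ) / N.choose l with hg1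
    set h0 := (#(eG0 N H) : ℝ) / N.choose (m+1) with hh0
    set h1 := (#(eG1 N H) : ℝ) / N.choose m with hh1
    have eg : (#G : ℝ) / (N+1).choose (l+1) = (1 - p1) * g0 + p1 * g1 := by
      have a1 : (#(eG0 N G) : ℝ) = g0 * N.choose (l+1) := by rw [hg0, div_mul_cancel₀ _ (ne_of_gt (by assumption))]
      have a2 : (#(eG1 N G) : ℝ) = g1 * N.choose l := by rw [hg1, div_mul_cancel₀ _ (ne_of_gt (by assumption))]
      rw [cG, a1, a2, r1, r2]
      field_simp
    have eh : (#H : ℝ) / (N+1).choose (m+1) = (1 - p2) * h0 + p2 * h1 := by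
      have a1 : (#(eG0 N H) : ℝ) = h0 * N.choose (m+1) := by rw [hh0, div_mul_cancel₀ _ (ne_of_gt (by assumption))]
      have a2 : (#(eG1 N H) : ℝ) = h1 * N.choose m := by rw [hh1, div_mul_cancel₀ _ (ne_of_gt (by assumption))]
      rw [cH, a1, a2, r3, r4]
      field_simp
    rw [eg, eh]
    have hp1' : 0 ≤ p1 := by rw [hp1]; positivity
    have hp2' : 0 ≤ p2 := by rw [hp2]; positivity
    have hT0 : 0 ≤ T := by rw [hT]; positivity
    clear_value p1 p2 g0 g1 h0 h1 T
    have hfin : 0 ≤ T * ((p1 * p2) * ((g0 - g1) * (h0 - h1))) :=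
      mul_nonneg hT0 (mul_nonneg (mul_nonneg hp1' hp2') (mul_nonneg (by linarith) (by linarith)))
    nlinarith


def eAct {N : ℕ} (σ : Equiv.Perm (Fin N)) (x : ℕ) : ℕ := if h : x < N then (σ ⟨x, h⟩ : ℕ) else x

theorem eAct_lt {N : ℕ} (σ : Equiv.Perm (Fin N)) {x : ℕ} (h : x < N) : eAct σ x < N := by
  unfold eAct; rw [dif_pos h]; exact (σ ⟨x, h⟩).2

theorem eAct_mul {N : ℕ} (σ τ : Equiv.Perm (Fin N)) (x : ℕ) : eAct (σ * τ) x = eAct σ (eAct τ x) := by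
  by_cases h : x < N
  · have h2 := eAct_lt τ h
    unfold eAct at h2 ⊢
    simp only [h, dif_pos] at h2 ⊢
    simp
  · unfold eAct
    simp [h]

theorem eAct_inj {N : ℕ} (σ : Equiv.Perm (Fin N)) : Function.Injective (eAct σ) := by
  intro x y hxy
  have := congrArg (eAct σ⁻¹) hxy
  rw [← eAct_mul, ← eAct_mul] at this
  simpa [eAct] using this

def eImg {N : ℕ} (σ : Equiv.Perm (Fin N)) (A : Finset ℕ) : Finset ℕ := A.image (eAct σ)

theorem eImg_mul {N : ℕ} (σ τ : Equiv.Perm (Fin N)) (A : Finset ℕ) :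
    eImg (σ * τ) A = eImg σ (eImg τ A) := by
  unfold eImg
  rw [image_image]
  congr 1
  ext x; simp [eAct_mul]

theorem eImg_one {N : ℕ} (A : Finset ℕ) : eImg (1 : Equiv.Perm (Fin N)) A = A := by
  unfold eImg
  have : eAct (1 : Equiv.Perm (Fin N)) = id := by
    ext x; simp [eAct]
  rw [this, image_id]

theorem eImg_mem {N m : ℕ} (σ : Equiv.Perm (Fin N)) {A : Finset ℕ} (hA : A ∈ (range N).powersetCard m) :
    eImg σ A ∈ (range N).powersetCard m := by
  rw [mem_powersetCard] at hA ⊢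
  constructor
  · intro x hx
    simp only [eImg, mem_image] at hx
    obtain ⟨y, hy, rfl⟩ := hx
    have := hA.1 hy
    rw [mem_range] at this ⊢
    exact eAct_lt σ this
  · unfold eImg; rw [card_image_of_injective _ (eAct_inj σ), hA.2]

theorem eImg_disj {N : ℕ} (σ : Equiv.Perm (Fin N)) {A B : Finset ℕ} (h : Disjoint A B) :
    Disjoint (eImg σ A) (eImg σ B) := by
  unfold eImg
  rwa [disjoint_image (eAct_inj σ)]

theorem e_card_fin {N : ℕ} {S : Finset ℕ} (hS : S ⊆ range N) :
    #(univ.filter (fun x : Fin N => (x:ℕ) ∈ S)) = #S := by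
  rw [← card_map Fin.valEmbedding]
  congr 1
  ext x
  simp
  constructor
  · rintro ⟨a, h, rfl⟩; exact h
  · intro h
    have := hS h
    rw [mem_range] at this
    exact ⟨⟨x, this⟩, h, rfl⟩

theorem e_trans {N : ℕ} {A B A' B' : Finset ℕ} (hA : A ⊆ range N) (hB : B ⊆ range N)
    (hA' : A' ⊆ range N) (hB' : B' ⊆ range N) (hd : Disjoint A B) (hd' : Disjoint A' B')
    (h1 : #A = #A') (h2 : #B = #B') :
    ∃ σ : Equiv.Perm (Fin N), eImg σ A = A' ∧ eImg σ B = B' := by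
  classical
  let col : Finset ℕ → Finset ℕ → Fin N → ℕ := fun U V x => if (x:ℕ) ∈ U then 0 else if (x:ℕ) ∈ V then 1 else 2
  have hcard : ∀ c, #(univ.filter (fun x => col A B x = c)) = #(univ.filter (fun x => col A' B' x = c)) := by
    have key : ∀ U V : Finset ℕ, U ⊆ range N → V ⊆ range N → Disjoint U V → ∀ c,
        #(univ.filter (fun x => col U V x = c)) = if c = 0 then #U else if c = 1 then #V else
          if c = 2 then N - (#U + #V) else 0 := by
      intro U V hU hV hUV c
      split_ifs with c0 c1 c2
      · subst c0
        rw [← e_card_fin hU]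
        congr 1
        ext x; simp [col]
        by_cases hx : (x:ℕ) ∈ U
        · simp [hx]
        · simp only [hx, not_false_eq_true, forall_const, iff_false]
          split_ifs <;> simp
      · subst c1
        rw [← e_card_fin hV]
        congr 1
        ext x; simp [col]
        by_cases hx : (x:ℕ) ∈ U
        · simp [hx, disjoint_left.mp hUV hx]
        · simp [hx]
      · subst c2
        have : #(range N \ (U ∪ V)) = N - (#U + #V) := by
          rw [card_sdiff_of_subset (union_subset hU hV), card_range, card_union_of_disjoint hUV]
        rw [← this, ← e_card_fin (N := N) sdiff_subset]
        congr 1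
        ext x; simp [col]
        by_cases hx : (x:ℕ) ∈ U
        · simp [hx]
        · simp [hx]
      · rw [card_eq_zero, filter_eq_empty_iff]
        intro x _
        simp only [col]
        split_ifs <;> omega
    intro c
    rw [key A B hA hB hd, key A' B' hA' hB' hd', h1, h2]
  have heq : ∀ c, Nonempty ({x // col A B x = c} ≃ {x // col A' B' x = c}) := by
    intro c
    refine Fintype.card_eq.mp ?_
    rw [Fintype.card_subtype, Fintype.card_subtype]
    exact hcard c
  let e := Equiv.ofFiberEquiv (fun c => (heq c).some)
  have he : ∀ x, col A' B' (e x) = col A B x := fun x => Equiv.ofFiberEquiv_map _ x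
  refine ⟨e, ?_, ?_⟩
  · apply eq_of_subset_of_card_le
    · intro y hy
      simp only [eImg, mem_image] at hy
      obtain ⟨x, hx, rfl⟩ := hy
      have hxN := mem_range.mp (hA hx)
      have := he ⟨x, hxN⟩
      simp only [col, hx, if_true] at this
      simp only [eAct, hxN, dif_pos]
      by_contra hcon
      rw [if_neg hcon] at this
      split_ifs at this
    · unfold eImg; rw [card_image_of_injective _ (eAct_inj e), h1]
  · apply eq_of_subset_of_card_le
    · intro y hy
      simp only [eImg, mem_image] at hy
      obtain ⟨x, hx, rfl⟩ := hy
      have hxN := mem_range.mp (hB hx)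
      have := he ⟨x, hxN⟩
      have hxA : x ∉ A := disjoint_right.mp hd hx
      simp only [col, hx, hxA, if_true, if_false] at this
      simp only [eAct, hxN, dif_pos]
      by_contra hcon
      rw [if_neg hcon] at this
      split_ifs at this
      omega
    · unfold eImg; rw [card_image_of_injective _ (eAct_inj e), h2]

theorem e_avg {Γ X : Type*} [Group Γ] [Fintype Γ] (act : Γ → X → X)
    (hmul : ∀ g h x, act (g * h) x = act g (act h x)) (hone : ∀ x, act 1 x = x)
    (Y : Finset X) (hinv : ∀ g, ∀ y ∈ Y, act g y ∈ Y)
    (htr : ∀ y ∈ Y, ∀ y' ∈ Y, ∃ g, act g y = y') (y : X) (hy : y ∈ Y) (f : X → ℝ) :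
    (#Y : ℝ) * ∑ g : Γ, f (act g y) = (Fintype.card Γ : ℝ) * ∑ x ∈ Y, f x := by
  have h1 : ∀ y' ∈ Y, ∑ g : Γ, f (act g y') = ∑ g : Γ, f (act g y) := by
    intro y' hy'
    obtain ⟨h, rfl⟩ := htr y hy y' hy'
    rw [← Equiv.sum_comp (Equiv.mulRight h) (fun g => f (act g y))]
    simp [hmul]
  have h2 : ∀ g : Γ, ∑ x ∈ Y, f (act g x) = ∑ x ∈ Y, f x := by
    intro g
    refine sum_bij' (fun x _ => act g x) (fun x _ => act g⁻¹ x) (fun x hx => hinv g x hx)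
      (fun x hx => hinv _ x hx) ?_ ?_ ?_
    · intro x _; simp [← hmul, hone]
    · intro x _; simp [← hmul, hone]
    · intro x _; rfl
  calc (#Y : ℝ) * ∑ g : Γ, f (act g y) = ∑ y' ∈ Y, ∑ g : Γ, f (act g y') := by
        rw [sum_congr rfl h1]; simp
    _ = ∑ g : Γ, ∑ x ∈ Y, f (act g x) := sum_comm
    _ = ∑ g : Γ, ∑ x ∈ Y, f x := by simp [h2]
    _ = _ := by simp

theorem e_single {N m : ℕ} (G : Finset (Finset ℕ)) (hG : G ⊆ (range N).powersetCard m)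
    (A : Finset ℕ) (hA : A ∈ (range N).powersetCard m) :
    ∑ σ : Equiv.Perm (Fin N), (if eImg σ A ∈ G then (1:ℝ) else 0) =
      (Fintype.card (Equiv.Perm (Fin N)) : ℝ) * ((#G : ℝ) / N.choose m) := by
  have h := e_avg (Γ := Equiv.Perm (Fin N)) (fun σ A => eImg σ A) (fun g h x => eImg_mul g h x)
    (fun x => eImg_one x) ((range N).powersetCard m) (fun g y hy => eImg_mem g hy) (by
      intro y hy y' hy'
      have a := mem_powersetCard.mp hy
      have b := mem_powersetCard.mp hy'
      obtain ⟨σ, h1, _⟩ := e_trans a.1 (empty_subset _) b.1 (empty_subset _) (disjoint_empty_right y) (disjoint_empty_right y')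
        (a.2.trans b.2.symm) rfl
      exact ⟨σ, h1⟩) A hA (fun A => if A ∈ G then (1:ℝ) else 0)
  have h3 : ∑ x ∈ (range N).powersetCard m, (if x ∈ G then (1:ℝ) else 0) = #G := by
    rw [← sum_filter]
    have : ((range N).powersetCard m).filter (· ∈ G) = G := by
      ext x; simp; intro h
      have := mem_powersetCard.mp (hG h); exact ⟨this.1, this.2⟩
    rw [this]; simp
  rw [h3] at h
  have hpos : (#((range N).powersetCard m) : ℝ) ≠ 0 := by
    have : 0 < #((range N).powersetCard m) := card_pos.mpr ⟨A, hA⟩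
    positivity
  rw [card_powersetCard, card_range] at h hpos
  rw [← mul_div_assoc, eq_div_iff hpos, ← h]
  ring

theorem e_pair {N m : ℕ} (G : Finset (Finset ℕ)) (hG : G ⊆ (range N).powersetCard m) (hs : EShifted G)
    (A B : Finset ℕ) (hA : A ∈ (range N).powersetCard m) (hB : B ∈ (range N).powersetCard m)
    (hd : Disjoint A B) :
    ∑ σ : Equiv.Perm (Fin N), ((if eImg σ A ∈ G then (1:ℝ) else 0) * (if eImg σ B ∈ G then (1:ℝ) else 0)) ≤
      (Fintype.card (Equiv.Perm (Fin N)) : ℝ) * ((#G : ℝ) / N.choose m) ^ 2 := by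
  set P := ((range N).powersetCard m ×ˢ (range N).powersetCard m).filter (fun p => Disjoint p.1 p.2) with hP
  have h := e_avg (Γ := Equiv.Perm (Fin N)) (fun σ (p : Finset ℕ × Finset ℕ) => (eImg σ p.1, eImg σ p.2))
    (fun g h x => by simp [eImg_mul]) (fun x => by simp [eImg_one]) P (by
      intro g y hy
      simp only [hP, mem_filter, mem_product] at hy ⊢
      exact ⟨⟨eImg_mem g hy.1.1, eImg_mem g hy.1.2⟩, eImg_disj g hy.2⟩) (by
      intro y hy y' hy'
      simp only [hP, mem_filter, mem_product, mem_powersetCard] at hy hy'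
      obtain ⟨σ, h1, h2⟩ := e_trans hy.1.1.1 hy.1.2.1 hy'.1.1.1 hy'.1.2.1 hy.2 hy'.2
        (hy.1.1.2.trans hy'.1.1.2.symm) (hy.1.2.2.trans hy'.1.2.2.symm)
      exact ⟨σ, by simp [h1, h2]⟩) (A, B) (by simp only [hP, mem_filter, mem_product]; exact ⟨⟨hA, hB⟩, hd⟩)
      (fun p => (if p.1 ∈ G then (1:ℝ) else 0) * (if p.2 ∈ G then (1:ℝ) else 0))
  have hGf : ((range N).powersetCard m).filter (· ∈ G) = G := by
    ext x; simp; intro h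
    have := mem_powersetCard.mp (hG h); exact ⟨this.1, this.2⟩
  have h3 : ∑ p ∈ P, ((if p.1 ∈ G then (1:ℝ) else 0) * (if p.2 ∈ G then (1:ℝ) else 0)) = eD G G := by
    unfold eD
    rw [hP, sum_filter, sum_product]
    conv_rhs => rw [← hGf]
    rw [sum_filter]
    apply sum_congr rfl
    intro U _
    rw [sum_filter]
    by_cases hU : U ∈ G
    · simp only [hU, if_true]
      apply sum_congr rfl
      intro V _
      by_cases hV : V ∈ G <;> simp [hV]
    · simp [hU]
  have h4 : #P = N.choose m * (N - m).choose m := by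
    rw [hP, card_filter, sum_product]
    have : ∀ U ∈ (range N).powersetCard m, (∑ V ∈ (range N).powersetCard m, if Disjoint U V then 1 else 0) = (N - m).choose m := by
      intro U hU
      have hU := mem_powersetCard.mp hU
      rw [← card_filter]
      have : ((range N).powersetCard m).filter (fun V => Disjoint U V) = (range N \ U).powersetCard m := by
        ext V
        simp only [mem_filter, mem_powersetCard, subset_sdiff]
        constructor
        · rintro ⟨⟨a, b⟩, c⟩; exact ⟨⟨a, c.symm⟩, b⟩
        · rintro ⟨⟨a, c⟩, b⟩; exact ⟨⟨a, b⟩, c.symm⟩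
      rw [this, card_powersetCard, card_sdiff_of_subset hU.1, card_range, hU.2]
    rw [sum_congr rfl this]
    simp
  have hcorr := e_corr N m m G G hG hG hs hs
  rw [h3] at h
  have hpos : (0:ℝ) < #P := by
    have : 0 < #P := card_pos.mpr ⟨(A, B), by simp only [hP, mem_filter, mem_product]; exact ⟨⟨hA, hB⟩, hd⟩⟩
    positivity
  rw [← h4] at hcorr
  dsimp only at h
  have hW : (0:ℝ) ≤ (Fintype.card (Equiv.Perm (Fin N)) : ℝ) := by positivity
  have := mul_le_mul_of_nonneg_left hcorr hW
  rw [← h] at this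
  refine le_of_mul_le_mul_left (this.trans (le_of_eq ?_)) hpos
  ring

def eX {N : ℕ} (G : Finset (Finset ℕ)) (b : ℕ → Finset ℕ) (t : ℕ) (σ : Equiv.Perm (Fin N)) : Finset ℕ :=
  (range t).filter (fun i => eImg σ (b i) ∈ G)

theorem e_conc {N m t : ℕ} (G : Finset (Finset ℕ)) (hG : G ⊆ (range N).powersetCard m) (hs : EShifted G)
    (b : ℕ → Finset ℕ) (hb : ∀ i < t, b i ∈ (range N).powersetCard m)
    (hd : ∀ i < t, ∀ j < t, i ≠ j → Disjoint (b i) (b j)) :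
    (∑ σ : Equiv.Perm (Fin N), (#(eX G b t σ) : ℝ) =
      (Fintype.card (Equiv.Perm (Fin N)) : ℝ) * ((#G : ℝ) / N.choose m * t)) ∧
    (∑ σ : Equiv.Perm (Fin N), ((#(eX G b t σ) : ℝ) - (#G : ℝ) / N.choose m * t) ^ 2 ≤
      (Fintype.card (Equiv.Perm (Fin N)) : ℝ) * ((#G : ℝ) / N.choose m * t)) := by
  set W := (Fintype.card (Equiv.Perm (Fin N)) : ℝ) with hW
  set α := (#G : ℝ) / N.choose m with hα
  have hW0 : 0 ≤ W := by positivity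
  have hX : ∀ σ : Equiv.Perm (Fin N), (#(eX G b t σ) : ℝ) = ∑ i ∈ range t, if eImg σ (b i) ∈ G then (1:ℝ) else 0 := by
    intro σ; unfold eX; rw [card_filter]; push_cast; rfl
  have h1 : ∑ σ : Equiv.Perm (Fin N), (#(eX G b t σ) : ℝ) = W * (α * t) := by
    simp only [hX]
    rw [sum_comm, sum_congr rfl (fun i hi => e_single G hG (b i) (hb i (mem_range.mp hi)))]
    simp
    ring
  have h2 : ∑ σ : Equiv.Perm (Fin N), (#(eX G b t σ) : ℝ) ^ 2 ≤ W * (α * t) + W * (α * t) ^ 2 := by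
    simp only [hX, pow_two, sum_mul_sum]
    rw [sum_comm]
    simp only [sum_comm (s := univ)]
    calc _ ≤ ∑ i ∈ range t, ∑ j ∈ range t, ((if i = j then W * α else 0) + W * α ^ 2) := by
          apply sum_le_sum; intro i hi; apply sum_le_sum; intro j hj
          rw [mem_range] at hi hj
          by_cases hij : i = j
          · subst hij
            have := e_single G hG (b i) (hb i hi)
            simp only [if_true]
            calc _ = ∑ σ : Equiv.Perm (Fin N), (if eImg σ (b i) ∈ G then (1:ℝ) else 0) := by
                  apply sum_congr rfl; intro σ _; split_ifs <;> simp
              _ = W * α := this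
              _ ≤ _ := by nlinarith [mul_nonneg hW0 (sq_nonneg α)]
          · simp only [hij, if_false, zero_add]
            exact e_pair G hG hs _ _ (hb i hi) (hb j hj) (hd i hi j hj hij)
      _ = _ := by
          simp only [sum_add_distrib]
          have : ∑ i ∈ range t, ∑ j ∈ range t, (if i = j then W * α else 0) = ∑ i ∈ range t, W * α := by
            apply sum_congr rfl
            intro i hi
            rw [sum_ite_eq, if_pos hi]
          rw [this]
          simp
          ring
  refine ⟨h1, ?_⟩
  have : ∀ σ : Equiv.Perm (Fin N), ((#(eX G b t σ) : ℝ) - α * t) ^ 2 =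
    (#(eX G b t σ) : ℝ) ^ 2 - 2 * (α * t) * (#(eX G b t σ) : ℝ) + (α * t) ^ 2 := by intro σ; ring
  simp only [this]
  rw [sum_add_distrib, sum_sub_distrib, ← mul_sum, h1]
  simp only [sum_const, card_univ, nsmul_eq_mul]
  rw [← hW]
  nlinarith


def eUp (s : ℕ) (E : Finset ℕ) : Finset ℕ := E.image (· + (s+1))

def eLS (F : Finset (Finset ℕ)) (s N m : ℕ) (S : Finset ℕ) : Finset (Finset ℕ) :=
  ((range N).powersetCard m).filter (fun E => S ∪ eUp s E ∈ F)

open Classical in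
noncomputable def eK (F : Finset (Finset ℕ)) (s N m c : ℕ) : Finset (Finset ℕ) :=
  ((range N).powersetCard m).filter (fun E => ∀ S ∈ (range (s+1)).powersetCard c, S ∪ eUp s E ∈ F)

theorem eUp_mem {s x : ℕ} {E : Finset ℕ} : x ∈ eUp s E ↔ s + 1 ≤ x ∧ x - (s+1) ∈ E := by
  unfold eUp
  simp only [mem_image]
  constructor
  · rintro ⟨y, hy, rfl⟩; exact ⟨by omega, by simpa using hy⟩
  · rintro ⟨h1, h2⟩; exact ⟨_, h2, by omega⟩

theorem eLS_sub {F : Finset (Finset ℕ)} {s N m : ℕ} {S : Finset ℕ} :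
    eLS F s N m S ⊆ (range N).powersetCard m := filter_subset _ _

theorem eK_sub {F : Finset (Finset ℕ)} {s N m c : ℕ} :
    eK F s N m c ⊆ (range N).powersetCard m := by
  intro A hA
  simp only [eK, mem_filter] at hA
  exact hA.1

theorem eLS_shifted {F : Finset (Finset ℕ)} {s N m : ℕ} {S : Finset ℕ} (hF : EShifted F)
    (hS : S ⊆ range (s+1)) : EShifted (eLS F s N m S) := by
  intro A hA i j hij hj hi
  simp only [eLS, mem_filter, mem_powersetCard] at hA ⊢
  obtain ⟨⟨hA1, hA2⟩, hA3⟩ := hA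
  refine ⟨⟨?_, ?_⟩, ?_⟩
  · intro x hx
    rcases mem_insert.mp hx with rfl | h
    · have := hA1 hj; simp at this ⊢; omega
    · exact hA1 (mem_of_mem_erase h)
  · rw [card_insert_of_notMem (by simp [hi]), card_erase_of_mem hj]
    have : 0 < #A := card_pos.mpr ⟨_, hj⟩
    omega
  · have hnS : ∀ y, y + (s+1) ∉ S := by
      intro y hy; have := hS hy; simp at this; omega
    have := hF _ hA3 (i + (s+1)) (j + (s+1)) (by omega)
      (by simp [eUp_mem, hj]) (by simp [eUp_mem, hi, hnS])
    convert this using 1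
    ext x
    simp only [mem_union, mem_insert, mem_erase, eUp_mem]
    by_cases hx : s + 1 ≤ x
    · have hxS : x ∉ S := by
        have := hnS (x - (s+1)); rwa [Nat.sub_add_cancel hx] at this
      simp only [hx, hxS, true_and, false_or]
      have e1 : x - (s+1) = i ↔ x = i + (s+1) := by omega
      have e2 : x - (s+1) = j ↔ x = j + (s+1) := by omega
      simp only [ne_eq, e1, e2]
    · simp only [hx, false_and, or_false]
      have : x ≠ i + (s+1) := by omega
      have : x ≠ j + (s+1) := by omega
      simp_all

theorem eK_shifted {F : Finset (Finset ℕ)} {s N m c : ℕ} (hF : EShifted F) :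
    EShifted (eK F s N m c) := by
  have key : ∀ E, E ∈ (range N).powersetCard m → (E ∈ eK F s N m c ↔ ∀ S ∈ (range (s+1)).powersetCard c, E ∈ eLS F s N m S) := by
    intro E hE
    simp only [eK, eLS, mem_filter, hE, true_and]
  intro A hA i j hij hj hi
  have hsub : insert i (A.erase j) ∈ (range N).powersetCard m := by
    have h := mem_powersetCard.mp (eK_sub hA)
    rw [mem_powersetCard]
    constructor
    · intro x hx
      rcases mem_insert.mp hx with rfl | h'
      · have := h.1 hj; simp at this ⊢; omega
      · exact h.1 (mem_of_mem_erase h')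
    · rw [card_insert_of_notMem (by simp [hi]), card_erase_of_mem hj]
      have : 0 < #A := card_pos.mpr ⟨_, hj⟩
      omega
  rw [key _ hsub]
  intro S hS
  exact eLS_shifted hF (mem_powersetCard.mp hS).1 A ((key _ (eK_sub hA)).mp hA S hS) i j hij hj hi

theorem eLk_anti {F : Finset (Finset ℕ)} {s N m i j : ℕ} (hF : EShifted F) (hij : i ≤ j) (hj : j ≤ s) :
    eLS F s N m {j} ⊆ eLS F s N m {i} := by
  rcases hij.eq_or_lt with rfl | hij
  · exact Subset.rfl
  intro E hE
  simp only [eLS, mem_filter] at hE ⊢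
  refine ⟨hE.1, ?_⟩
  have := hF _ hE.2 i j hij (by simp) (by simp [eUp_mem]; omega)
  convert this using 1
  ext x
  simp only [mem_union, mem_insert, mem_erase, eUp_mem, mem_singleton]
  grind

theorem eK_sub_lk {F : Finset (Finset ℕ)} {s N m i : ℕ} (hi : i ≤ s) :
    eK F s N m 1 ⊆ eLS F s N m {i} := by
  intro E hE
  simp only [eK, eLS, mem_filter] at hE ⊢
  exact ⟨hE.1, hE.2 {i} (by simp [mem_powersetCard]; omega)⟩

theorem eK_erase {F : Finset (Finset ℕ)} {s N m c : ℕ} (hF : EShifted F) (E : Finset ℕ)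
    (hE : E ∈ eK F s N (m+1) c) (x : ℕ) (hx : x ∈ E) : E.erase x ∈ eK F s N m (c+1) := by
  simp only [eK, mem_filter, mem_powersetCard] at hE ⊢
  obtain ⟨⟨h1, h2⟩, h3⟩ := hE
  refine ⟨⟨(erase_subset _ _).trans h1, by rw [card_erase_of_mem hx]; omega⟩, ?_⟩
  rintro S ⟨hS1, hS2⟩
  obtain ⟨y, hy⟩ : S.Nonempty := by rw [← card_pos]; omega
  have hys := hS1 hy
  simp at hys
  have := h3 (S.erase y) ⟨(erase_subset _ _).trans hS1, by rw [card_erase_of_mem hy]; omega⟩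
  have := hF _ this y (x + (s+1)) (by omega) (by simp [eUp_mem, hx]) (by simp [eUp_mem]; omega)
  convert this using 1
  ext z
  simp only [mem_union, mem_insert, mem_erase, eUp_mem]
  have hzS : z ∈ S → z < s+1 := fun h => mem_range.mp (hS1 h)
  by_cases hz : s + 1 ≤ z
  · have hzS' : z ∉ S := fun h => by have := hzS h; omega
    have e2 : z - (s+1) = x ↔ z = x + (s+1) := by omega
    have : z ≠ y := by omega
    simp only [hz, hzS', true_and, false_or, ne_eq, e2, this]
    tauto
  · have : z ≠ x + (s+1) := by omega
    simp only [hz, false_and, or_false]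
    by_cases hzy : z = y
    · simp [hzy, hy]
    · simp [hzy, this]

theorem eCnt_up (s : ℕ) (E : Finset ℕ) (m : ℕ) : eCnt (eUp s E) m = eCnt E (m - (s+1)) := by
  unfold eCnt eUp
  rw [filter_image, card_image_of_injective _ (add_left_injective _)]
  congr 1
  ext x
  simp
  omega

theorem eK0_le {F : Finset (Finset ℕ)} {s N q : ℕ} (hF : EShifted F) (hk : ∀ A ∈ F, #A = q+2)
    (hN : ENoMat F s) : (#(eK F s N (q+2) 0) : ℝ) ≤ ((q+1 : ℝ) / (q+2) * s) * #(eK F s N (q+1) 1) := by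
  refine e_lemK (l := q+2) _ _ (fun i => i * (s+1) - 1 - (s+1)) _ (by positivity) ?_ ?_ ?_ ?_
  · intro E hE
    refine ⟨(mem_powersetCard.mp (eK_sub hE)).2, ?_⟩
    simp only [eK, mem_filter] at hE
    have := hE.2 ∅ (by simp)
    rw [empty_union] at this
    obtain ⟨i, h1, h2, h3⟩ := e_ballot hF hk hN _ this
    rw [eCnt_up] at h3
    exact ⟨i, h1, h2, h3⟩
  · intro a b hab
    have := Nat.mul_le_mul_right (s+1) hab
    dsimp only
    omega
  · exact fun E hE x hx => eK_erase hF E hE x hx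
  · intro i h1 h2
    rcases h1.eq_or_lt with rfl | h1
    · have : 1 * (s+1) - 1 - (s+1) = 0 := by omega
      rw [this]; simp; positivity
    · obtain ⟨j, rfl⟩ : ∃ j, i = j + 1 := ⟨i-1, by omega⟩
      have : (j+1) * (s+1) - 1 - (s+1) = j * (s+1) - 1 := by
        rw [add_mul, one_mul]; omega
      rw [this]
      have hj : 1 ≤ j * (s+1) := Nat.mul_pos (by omega) (Nat.succ_pos s)
      rw [Nat.cast_sub hj]
      push_cast
      have hjq : (j:ℝ) ≤ q + 1 := by exact_mod_cast (by omega : j ≤ q+1)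
      have : (j:ℝ) ≤ (q+1)/(q+2) * (j+1) := by
        rw [div_mul_eq_mul_div, le_div_iff₀ (by positivity)]; nlinarith
      have := mul_le_mul_of_nonneg_right this (Nat.cast_nonneg (α := ℝ) s)
      nlinarith

theorem eK1_le {F : Finset (Finset ℕ)} {s N q : ℕ} (hF : EShifted F) (hk : ∀ A ∈ F, #A = q+2)
    (hN : ENoMat F s) : (#(eK F s N (q+1) 1) : ℝ) ≤ (s : ℝ) * #(eK F s N q 2) := by
  refine e_lemK (l := q+1) _ _ (fun i => i * (s+1) - 1) _ (by positivity) ?_ ?_ ?_ ?_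
  · intro E hE
    refine ⟨(mem_powersetCard.mp (eK_sub hE)).2, ?_⟩
    simp only [eK, mem_filter] at hE
    have := hE.2 {s} (by simp [mem_powersetCard])
    obtain ⟨i, h1, h2, h3⟩ := e_ballot hF hk hN _ this
    have h4 : eCnt ({s} ∪ eUp s E) (i * (s+1) - 1) ≤ (if s < i * (s+1) - 1 then 1 else 0) + eCnt E (i * (s+1) - 1 - (s+1)) := by
      rw [← eCnt_up s E]
      unfold eCnt
      rw [filter_union]
      refine (card_union_le _ _).trans (Nat.add_le_add_right ?_ _)
      rw [filter_singleton]
      split_ifs <;> simp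
    rcases h1.eq_or_lt with rfl | h1
    · exfalso
      have e0 : 1 * (s+1) - 1 = s := by omega
      rw [e0] at h3 h4
      have : eCnt E (s - (s+1)) = 0 := by
        rw [show s - (s+1) = 0 by omega]; simp [eCnt]
      rw [this, if_neg (lt_irrefl s)] at h4
      omega
    · obtain ⟨j, rfl⟩ : ∃ j, i = j + 1 := ⟨i-1, by omega⟩
      have : (j+1) * (s+1) - 1 - (s+1) = j * (s+1) - 1 := by
        rw [add_mul, one_mul]; omega
      rw [this] at h4
      refine ⟨j, by omega, by omega, ?_⟩
      split_ifs at h4 <;> omega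
  · intro a b hab
    have := Nat.mul_le_mul_right (s+1) hab
    dsimp only
    omega
  · exact fun E hE x hx => eK_erase hF E hE x hx
  · intro i h1 h2
    have hj : 1 ≤ i * (s+1) := Nat.mul_pos (by omega) (Nat.succ_pos s)
    rw [Nat.cast_sub hj]
    push_cast
    nlinarith

theorem e_disj_up {s : ℕ} {S S' E E' : Finset ℕ} (hS : S ⊆ range (s+1)) (hS' : S' ⊆ range (s+1))
    (h1 : Disjoint S S') (h2 : Disjoint E E') : Disjoint (S ∪ eUp s E) (S' ∪ eUp s E') := by
  rw [disjoint_left]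
  intro x hx hx'
  simp only [mem_union, eUp_mem] at hx hx'
  rcases hx with hx | ⟨hx, hxE⟩
  · have := mem_range.mp (hS hx)
    rcases hx' with hx' | ⟨hx', _⟩
    · exact disjoint_left.mp h1 hx hx'
    · omega
  · rcases hx' with hx' | ⟨_, hx'⟩
    · have := mem_range.mp (hS' hx'); omega
    · exact disjoint_left.mp h2 hxE hx'

theorem e_hall {F : Finset (Finset ℕ)} {s N m t : ℕ} (hF : EShifted F) (hN : ENoMat F s)
    (b : ℕ → Finset ℕ) (hd : ∀ i < t, ∀ j < t, i ≠ j → Disjoint (b i) (b j)) :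
    ∃ j ≤ s, #((range t).filter (fun r => b r ∈ eLS F s N m {s - j})) ≤ j := by
  by_contra hcon
  push Not at hcon
  set T : Fin (s+1) → Finset ℕ := fun i => (range t).filter (fun r => b r ∈ eLS F s N m {(i:ℕ)}) with hT
  have hall : ∀ S : Finset (Fin (s+1)), #S ≤ #(S.biUnion T) := by
    intro S
    rcases S.eq_empty_or_nonempty with rfl | hne
    · simp
    set i0 := S.min' hne with hi0
    have h0 : i0 ∈ S := min'_mem _ _
    have h1 : #S ≤ s + 1 - i0 := by
      have : S ⊆ Finset.Ici i0 := by
        intro x hx; simp; exact min'_le _ _ hx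
      have := card_le_card this
      simpa using this
    have h2 := hcon (s - i0) (by omega)
    have h3 : s - (s - (i0:ℕ)) = i0 := by have := i0.2; omega
    rw [h3] at h2
    have h4 : #(T i0) ≤ #(S.biUnion T) := card_le_card (subset_biUnion_of_mem T h0)
    have h5 : s - (i0:ℕ) < #(T i0) := h2
    have := i0.2
    omega
  obtain ⟨f, hf1, hf2⟩ := (Finset.all_card_le_biUnion_card_iff_exists_injective T).mp hall
  apply hN
  have hf3 : ∀ i, f i < t ∧ b (f i) ∈ eLS F s N m {(i:ℕ)} := by
    intro i; have := hf2 i; simp only [hT, mem_filter, mem_range] at this; exact this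
  refine ⟨fun i => {(i:ℕ)} ∪ eUp s (b (f i)), ?_, ?_⟩
  · intro i
    have := (hf3 i).2
    simp only [eLS, mem_filter] at this
    exact this.2
  · intro p q hpq
    apply e_disj_up
    · simp; omega
    · simp; omega
    · simp; intro h; exact hpq (Fin.ext h)
    · exact hd _ (hf3 p).1 _ (hf3 q).1 (fun h => hpq (hf1 h))


theorem e_count {F : Finset (Finset ℕ)} {s N q : ℕ} (hF : F ⊆ (range (N + (s+1))).powersetCard (q+2)) :
    #F + N.choose (q+2) + (s+1) * N.choose (q+1) ≤
      (N + (s+1)).choose (q+2) + #(eK F s N (q+2) 0) + ∑ i ∈ range (s+1), #(eLS F s N (q+1) {i}) := by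
  classical
  set IS : Finset (Finset ℕ) := insert ∅ ((range (s+1)).image (fun i => {i})) with hIS
  have hIS1 : ∀ S ∈ IS, S ⊆ range (s+1) ∧ #S ≤ 1 := by
    intro S hS
    simp only [hIS, mem_insert, mem_image] at hS
    rcases hS with rfl | ⟨i, hi, rfl⟩
    · simp
    · simpa using hi
  set Z : Finset ℕ → Finset (Finset ℕ) := fun S =>
    ((range N).powersetCard (q+2-#S) \ eLS F s N (q+2-#S) S).image (fun E => S ∪ eUp s E) with hZ
  have hnS : ∀ S ∈ IS, ∀ x ∈ S, x < s+1 := fun S hS x hx => mem_range.mp ((hIS1 S hS).1 hx)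
  have hfil : ∀ S ∈ IS, ∀ A ∈ Z S, A.filter (· < s+1) = S := by
    intro S hS A hA
    simp only [hZ, mem_image] at hA
    obtain ⟨E, _, rfl⟩ := hA
    ext x
    simp only [mem_filter, mem_union, eUp_mem]
    constructor
    · rintro ⟨h | h, h2⟩
      · exact h
      · omega
    · intro h; exact ⟨Or.inl h, hnS S hS x h⟩
  have hdisj : (IS : Set (Finset ℕ)).PairwiseDisjoint Z := by
    intro S hS S' hS' hne
    rw [Function.onFun, disjoint_left]
    intro A hA hA'
    exact hne ((hfil S hS A hA).symm.trans (hfil S' hS' A hA'))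
  have hinj : ∀ S ∈ IS, Function.Injective (fun E => S ∪ eUp s E) := by
    intro S hS E E' h
    ext x
    have h1 : x + (s+1) ∉ S := fun h => by have := hnS S hS _ h; omega
    have := congrArg (fun U => x + (s+1) ∈ U) h
    simpa [eUp_mem, h1] using this
  have hcard : ∀ S ∈ IS, #(Z S) + #(eLS F s N (q+2-#S) S) = N.choose (q+2-#S) := by
    intro S hS
    simp only [hZ]
    rw [card_image_of_injective _ (hinj S hS), card_sdiff_add_card_eq_card eLS_sub, card_powersetCard, card_range]
  have hsub : IS.biUnion Z ⊆ (range (N + (s+1))).powersetCard (q+2) \ F := by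
    intro A hA
    simp only [mem_biUnion, hZ, mem_image, mem_sdiff] at hA
    obtain ⟨S, hS, E, ⟨hE1, hE2⟩, rfl⟩ := hA
    rw [mem_sdiff]
    constructor
    · rw [mem_powersetCard] at hE1 ⊢
      constructor
      · intro x hx
        simp only [mem_union, eUp_mem] at hx
        rcases hx with hx | hx
        · have := hnS S hS x hx; simp; omega
        · have := hE1.1 hx.2; simp at this ⊢; omega
      · rw [card_union_of_disjoint]
        · unfold eUp
          rw [card_image_of_injective _ (add_left_injective _), hE1.2]
          have := (hIS1 S hS).2
          omega
        · rw [disjoint_left]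
          intro x hx hx'
          have := hnS S hS x hx
          rw [eUp_mem] at hx'
          omega
    · intro h
      apply hE2
      simp only [eLS, mem_filter]
      exact ⟨hE1, h⟩
  have h1 := card_le_card hsub
  rw [card_biUnion hdisj] at h1
  have h2 := card_sdiff_add_card_eq_card hF
  rw [card_powersetCard, card_range] at h2
  have h3 : ∑ S ∈ IS, #(Z S) + ∑ S ∈ IS, #(eLS F s N (q+2-#S) S) = ∑ S ∈ IS, N.choose (q+2-#S) := by
    rw [← sum_add_distrib]
    exact sum_congr rfl hcard
  have hni : (∅ : Finset ℕ) ∉ (range (s+1)).image (fun i => ({i} : Finset ℕ)) := by simp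
  have hsum : ∀ f : Finset ℕ → ℕ, ∑ S ∈ IS, f S = f ∅ + ∑ i ∈ range (s+1), f {i} := by
    intro f
    rw [hIS, sum_insert hni, sum_image]
    intro a _ b _ h
    simpa using h
  rw [hsum (fun S => N.choose (q+2-#S)), hsum (fun S => #(eLS F s N (q+2-#S) S))] at h3
  have h4 : eK F s N (q+2) 0 = eLS F s N (q+2) ∅ := by
    ext E
    simp [eK, eLS]
  rw [h4]
  simp at h3
  omega


theorem e_realD {γ e s t c p X j : ℝ} (he : 0 < e) (hX : 0 ≤ X) (hXj : X ≤ j) (hj : j ≤ s)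
    (hc0 : 0 ≤ c) (hcs : c ≤ s) (hp0 : 0 ≤ p) (hps : p ≤ s) (hcp : c * p ≤ (γ - 1 - e) * s ^ 2)
    (ht : γ * s - 2 ≤ t) (h1 : 12 ≤ e * s) (h2 : 3 ≤ (γ - 1) * s) (hs : 0 < s) :
    (s - j) * t + (j + 1) * j + c * X - s * t ≤
      -(e/2) * s * X + ((1 + e/2) / (e/4)^2) * (X - p)^2 := by
  have hL : 0 ≤ ((1 + e/2) / (e/4)^2) * (X - p)^2 := by positivity
  by_cases hcase : X ≤ p + e/4 * s
  · have hcpl : c + p ≤ (γ - e) * s := by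
      have : 0 ≤ (s - c) * (s - p) := mul_nonneg (by linarith) (by linarith)
      have : s * (c + p) ≤ s * ((γ - e) * s) := by nlinarith
      exact le_of_mul_le_mul_left this hs
    have hA : X * (X + 1 - t) + c * X ≤ -(e/2) * s * X := by
      have : X + c + 1 - t ≤ -(e/2) * s := by linarith
      nlinarith
    have hB : s * (s + 1 - t) + c * X ≤ -(e/2) * s * X := by
      have h3 : c * X ≤ c * p + e/4 * s^2 := by
        have : c * X ≤ c * (p + e/4 * s) := mul_le_mul_of_nonneg_left hcase hc0
        have h4 : c * (e/4 * s) ≤ s * (e/4 * s) := mul_le_mul_of_nonneg_right hcs (by positivity)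
        nlinarith
      have h5 : s * (s + 1 - t) ≤ s * (s + 3 - γ * s) := mul_le_mul_of_nonneg_left (by linarith) hs.le
      have h6 : (e/2) * s * X ≤ (e/2) * s * s := mul_le_mul_of_nonneg_left (by linarith) (by positivity)
      have h7 : 12 * s ≤ e * s * s := mul_le_mul_of_nonneg_right h1 hs.le
      nlinarith
    have hconv : j * (j + 1 - t) ≤ (X + s + 1 - t) * j - X * s := by
      nlinarith [mul_nonneg (sub_nonneg.mpr hXj) (sub_nonneg.mpr hj)]
    by_cases hsgn : 0 ≤ X + s + 1 - t
    · have : (X + s + 1 - t) * j ≤ (X + s + 1 - t) * s := mul_le_mul_of_nonneg_left hj hsgn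
      nlinarith
    · have : (X + s + 1 - t) * j ≤ (X + s + 1 - t) * X :=
        mul_le_mul_of_nonpos_left hXj (by linarith)
      nlinarith
  · push Not at hcase
    have h3 : (e/4 * s)^2 ≤ (X - p)^2 := pow_le_pow_left₀ (by positivity) (by linarith) 2
    have h4 : (1 + e/2) * s^2 ≤ ((1 + e/2) / (e/4)^2) * (X - p)^2 := by
      have : (1 + e/2) * s^2 = ((1 + e/2) / (e/4)^2) * (e/4 * s)^2 := by field_simp
      rw [this]
      exact mul_le_mul_of_nonneg_left h3 (by positivity)
    have h5 : j * (j + 1 - t) ≤ 0 := mul_nonpos_of_nonneg_of_nonpos (by linarith) (by linarith)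
    have h6 : c * X ≤ s * s := mul_le_mul hcs (by linarith) hX hs.le
    have h7 : (e/2) * s * X ≤ (e/2) * s * s := mul_le_mul_of_nonneg_left (by linarith) (by positivity)
    nlinarith

theorem e_partD {γ e c : ℝ} {s N q : ℕ} {F : Finset (Finset ℕ)} (hF : EShifted F) (hN : ENoMat F s)
    (hγ : 1 < γ) (h2 : 3 ≤ (γ - 1) * s) (hNs : γ * s * (q+1) ≤ N + 1) :
    (#(eK F s N (q+1) 1) : ℝ) / N.choose (q+1) * (γ * s - 2) ≤ s ∧
    (0 < e → 12 ≤ e * s → 2 * ((1 + e/2) / (e/4)^2) ≤ e * s → 0 ≤ c → c ≤ s →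
      c * ((#(eK F s N (q+1) 1) : ℝ) / N.choose (q+1)) * γ ≤ (γ - 1 - e) * s →
      ∑ i ∈ range (s+1), (#(eLS F s N (q+1) {i}) : ℝ) / N.choose (q+1) +
        c * ((#(eK F s N (q+1) 1) : ℝ) / N.choose (q+1)) ≤ s) := by
  have hs0 : (0:ℝ) < s := by
    by_contra h
    have : (s:ℝ) = 0 := le_antisymm (not_lt.mp h) (Nat.cast_nonneg s)
    rw [this] at h2; linarith
  have hγs : 3 ≤ γ * s := by nlinarith
  obtain ⟨t, ht1, ht2, ht0⟩ : ∃ t : ℕ, γ * s - 2 ≤ t ∧ (t:ℝ) ≤ γ * s - 1 ∧ 0 < t := by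
    have h1 := Nat.floor_le (show 0 ≤ γ * s by linarith)
    have h3 := Nat.lt_floor_add_one (γ * s)
    have h4 : 3 ≤ ⌊γ * s⌋₊ := Nat.le_floor (by exact_mod_cast hγs)
    refine ⟨⌊γ * s⌋₊ - 1, ?_, ?_, by omega⟩
    · rw [Nat.cast_sub (by omega)]; push_cast; linarith
    · rw [Nat.cast_sub (by omega)]; push_cast; linarith
  have htN : t * (q+1) ≤ N := by
    have : ((t * (q+1) : ℕ) : ℝ) < (N:ℝ) + 1 := by
      push_cast
      have : (t:ℝ) * (q+1) ≤ (γ * s - 1) * (q+1) := mul_le_mul_of_nonneg_right ht2 (by positivity)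
      have : (0:ℝ) ≤ q := Nat.cast_nonneg q
      nlinarith
    have : t * (q+1) < N + 1 := by exact_mod_cast this
    omega
  set b : ℕ → Finset ℕ := fun i => Finset.Ico (i * (q+1)) (i * (q+1) + (q+1)) with hbdef
  have hb : ∀ i < t, b i ∈ (range N).powersetCard (q+1) := by
    intro i hi
    rw [mem_powersetCard]
    constructor
    · intro x hx
      simp only [hbdef, Finset.mem_Ico] at hx
      have : (i+1) * (q+1) ≤ t * (q+1) := Nat.mul_le_mul_right _ hi
      rw [mem_range]
      nlinarith
    · simp [hbdef]
  have hd' : ∀ i j, i < j → Disjoint (b i) (b j) := by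
    intro i j hij
    rw [disjoint_left]
    intro x hx hy
    simp only [hbdef, Finset.mem_Ico] at hx hy
    have : (i+1) * (q+1) ≤ j * (q+1) := Nat.mul_le_mul_right _ hij
    nlinarith
  have hd : ∀ i < t, ∀ j < t, i ≠ j → Disjoint (b i) (b j) := by
    intro i _ j _ hij
    rcases lt_or_gt_of_ne hij with h | h
    · exact hd' i j h
    · exact (hd' j i h).symm
  set K1 := eK F s N (q+1) 1 with hK1
  set W := (Fintype.card (Equiv.Perm (Fin N)) : ℝ) with hW
  have hWpos : 0 < W := by rw [hW]; exact_mod_cast Fintype.card_pos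
  obtain ⟨hm1, hm2⟩ := e_conc K1 eK_sub (eK_shifted hF) b hb hd
  have hLm : ∀ i ∈ range (s+1), ∑ σ : Equiv.Perm (Fin N), (#(eX (eLS F s N (q+1) {i}) b t σ) : ℝ) =
      W * ((#(eLS F s N (q+1) {i}) : ℝ) / N.choose (q+1) * t) := by
    intro i hi
    exact (e_conc _ eLS_sub (eLS_shifted hF (by simpa using hi)) b hb hd).1
  -- pointwise facts
  have hpt : ∀ σ : Equiv.Perm (Fin N), ∃ j : ℕ, j ≤ s ∧ #(eX K1 b t σ) ≤ j ∧
      ∑ i ∈ range (s+1), #(eX (eLS F s N (q+1) {i}) b t σ) ≤ (s - j) * t + (j+1) * j := by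
    intro σ
    obtain ⟨j, hj, hXj⟩ := e_hall (N := N) (m := q+1) hF hN (fun i => eImg σ (b i))
      (fun i hi j hj hij => eImg_disj σ (hd i hi j hj hij))
    refine ⟨j, hj, ?_, ?_⟩
    · refine le_trans (card_le_card ?_) hXj
      intro r hr
      simp only [eX, mem_filter] at hr ⊢
      exact ⟨hr.1, eK_sub_lk (by omega) hr.2⟩
    · have hsplit : s + 1 = (s - j) + (j + 1) := by omega
      rw [hsplit, sum_range_add]
      apply Nat.add_le_add
      · calc _ ≤ ∑ i ∈ range (s - j), t := by
              apply sum_le_sum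
              intro i _
              unfold eX
              exact (card_filter_le _ _).trans (by simp)
          _ = _ := by simp
      · calc _ ≤ ∑ i ∈ range (j+1), j := by
              apply sum_le_sum
              intro i hi
              rw [mem_range] at hi
              refine le_trans (card_le_card ?_) hXj
              intro r hr
              simp only [eX, mem_filter] at hr ⊢
              exact ⟨hr.1, eLk_anti hF (by omega) (by omega) hr.2⟩
          _ = _ := by simp
  set α := (#K1 : ℝ) / N.choose (q+1) with hα
  have hα0 : 0 ≤ α := by positivity
  have hps : α * t ≤ s := by
    have : W * (α * t) ≤ W * s := by
      rw [← hm1]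
      calc _ ≤ ∑ σ : Equiv.Perm (Fin N), (s:ℝ) := by
            apply sum_le_sum
            intro σ _
            obtain ⟨j, h1, h2, _⟩ := hpt σ
            exact_mod_cast h2.trans h1
        _ = _ := by simp [hW]
    exact le_of_mul_le_mul_left this hWpos
  have htpos : (0:ℝ) < t := by exact_mod_cast ht0
  refine ⟨(mul_le_mul_of_nonneg_left ht1 hα0).trans hps, ?_⟩
  intro he h12 hL hc0 hcs hcα
  set L := (1 + e/2) / (e/4)^2 with hLdef
  have hcp : c * (α * t) ≤ (γ - 1 - e) * s ^ 2 := by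
    have h3 : c * α * t ≤ c * α * (γ * s) := mul_le_mul_of_nonneg_left (by linarith) (by positivity)
    have h4 := mul_le_mul_of_nonneg_right hcα hs0.le
    nlinarith
  have hmain : ∀ σ : Equiv.Perm (Fin N), ∑ i ∈ range (s+1), (#(eX (eLS F s N (q+1) {i}) b t σ) : ℝ) + c * (#(eX K1 b t σ) : ℝ) - s * t
      ≤ -(e/2) * s * (#(eX K1 b t σ) : ℝ) + L * ((#(eX K1 b t σ) : ℝ) - α * t)^2 := by
    intro σ
    obtain ⟨j, hj1, hj2, hj3⟩ := hpt σ
    have hj3' : ∑ i ∈ range (s+1), (#(eX (eLS F s N (q+1) {i}) b t σ) : ℝ) ≤ ((s:ℝ) - j) * t + (j+1) * j := by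
      have : ((∑ i ∈ range (s+1), #(eX (eLS F s N (q+1) {i}) b t σ) : ℕ) : ℝ) ≤ (((s - j) * t + (j+1) * j : ℕ) : ℝ) := by
        exact_mod_cast hj3
      push_cast [Nat.cast_sub hj1] at this
      exact this
    have := e_realD (γ := γ) (e := e) (s := s) (t := t) (c := c) (p := α * t) (X := (#(eX K1 b t σ) : ℝ)) (j := j)
      he (by positivity) (by exact_mod_cast hj2) (by exact_mod_cast hj1) hc0 hcs (by positivity) hps hcp ht1 h12 h2 hs0
    linarith
  have hsum := sum_le_sum (fun σ (_ : σ ∈ (univ : Finset (Equiv.Perm (Fin N)))) => hmain σ)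
  rw [sum_sub_distrib, sum_add_distrib, sum_comm, sum_congr rfl hLm, ← mul_sum, ← mul_sum, hm1,
    sum_add_distrib, ← mul_sum, ← mul_sum, hm1, ← sum_mul] at hsum
  simp only [sum_const, card_univ, nsmul_eq_mul] at hsum
  rw [← hW] at hsum
  try rw [← mul_sum] at hsum
  have hL0 : 0 ≤ L := by rw [hLdef]; positivity
  have h5 : L * ∑ σ : Equiv.Perm (Fin N), ((#(eX K1 b t σ) : ℝ) - α * t)^2 ≤ L * (W * (α * t)) :=
    mul_le_mul_of_nonneg_left hm2 hL0
  have h6 : 0 ≤ (W * (α * t)) * (e/2 * s - L) := mul_nonneg (by positivity) (by linarith)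
  set Sa := ∑ i ∈ range (s+1), (#(eLS F s N (q+1) {i}) : ℝ) / N.choose (q+1) with hSa
  have h7 : (W * t) * (Sa + c * α - s) ≤ 0 := by nlinarith
  have h8 : 0 < W * t := by positivity
  nlinarith [nonpos_of_mul_nonpos_right h7 h8]


theorem e_enum (C : Finset ℕ) : ∃ e : ℕ → ℕ, (∀ i < #C, e i ∈ C) ∧
    ∀ i < #C, ∀ j < #C, e i = e j → i = j := by
  refine ⟨fun i => if h : i < #C then (C.equivFin.symm ⟨i, h⟩ : ℕ) else 0, ?_, ?_⟩
  · intro i hi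
    simp only [hi, dif_pos]
    exact (C.equivFin.symm ⟨i, hi⟩).2
  · intro i hi j hj h
    simp only [hi, hj, dif_pos] at h
    have := C.equivFin.symm.injective (Subtype.ext h)
    simpa using this

theorem e_ext {A B : Finset ℕ} (hAB : A ⊆ B) (f : ℕ → ℕ) (h1 : ∀ i < #A, f i ∈ A)
    (h2 : ∀ i < #A, ∀ j < #A, f i = f j → i = j) :
    ∃ f' : ℕ → ℕ, (∀ i < #A, f' i = f i) ∧ (∀ i < #B, f' i ∈ B) ∧
      ∀ i < #B, ∀ j < #B, f' i = f' j → i = j := by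
  obtain ⟨e, he1, he2⟩ := e_enum (B \ A)
  have hc : #(B \ A) + #A = #B := card_sdiff_add_card_eq_card hAB
  have he3 : ∀ i, i < #B → ¬ i < #A → e (i - #A) ∈ B ∧ e (i - #A) ∉ A := by
    intro i hi hi'
    exact mem_sdiff.mp (he1 _ (by omega))
  refine ⟨fun i => if i < #A then f i else e (i - #A), ?_, ?_, ?_⟩
  · intro i hi; simp [hi]
  · intro i hi
    by_cases h : i < #A
    · simp only [h, if_true]; exact hAB (h1 i h)
    · simp only [h, if_false]; exact (he3 i hi h).1
  · intro i hi j hj h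
    by_cases hi' : i < #A <;> by_cases hj' : j < #A <;> simp only [hi', hj', if_true, if_false] at h
    · exact h2 i hi' j hj' h
    · exact absurd (h ▸ h1 i hi') (he3 j hj hj').2
    · exact absurd (h ▸ h1 j hj') (he3 i hi hi').2
    · have := he2 _ (by omega) _ (by omega) h
      omega

theorem eK_mem {F : Finset (Finset ℕ)} {s N m c : ℕ} {E S : Finset ℕ} (h : E ∈ eK F s N m c)
    (hS : S ⊆ range (s+1)) (hc : #S = c) : S ∪ eUp s E ∈ F := by
  simp only [eK, mem_filter] at h
  exact h.2 S (mem_powersetCard.mpr ⟨hS, hc⟩)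

theorem e_cost {F : Finset (Finset ℕ)} {s N q : ℕ} (hN : ENoMat F s) (B E0 E1 E2 : ℕ → Finset ℕ)
    (T0 T1 T2 : Finset ℕ) (h01 : T0 ⊆ T1) (h12 : T1 ⊆ T2)
    (hd : ∀ i ∈ T2, ∀ j ∈ T2, i ≠ j → Disjoint (B i) (B j))
    (hB0 : ∀ i, E0 i ⊆ B i) (hB1 : ∀ i, E1 i ⊆ B i) (hB2 : ∀ i, E2 i ⊆ B i)
    (m0 : ∀ i ∈ T0, E0 i ∈ eK F s N (q+2) 0) (m1 : ∀ i ∈ T1, E1 i ∈ eK F s N (q+1) 1)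
    (m2 : ∀ i ∈ T2, E2 i ∈ eK F s N q 2) (hs : s + 1 ≤ #T2) : #T0 + #T1 ≤ s := by
  by_contra hcon
  push Not at hcon
  obtain ⟨f0, a0, b0⟩ := e_enum T0
  obtain ⟨f1, c1, a1, b1⟩ := e_ext h01 f0 a0 b0
  obtain ⟨f, c2, a2, b2⟩ := e_ext h12 f1 a1 b1
  have l01 := card_le_card h01
  have l12 := card_le_card h12
  have g0 : ∀ i < #T0, f i ∈ T0 := by
    intro i hi
    rw [c2 i (by omega), c1 i hi]; exact a0 i hi
  have g1 : ∀ i < #T1, f i ∈ T1 := by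
    intro i hi
    rw [c2 i hi]; exact a1 i hi
  set S : ℕ → Finset ℕ := fun p => if p < #T0 then ∅ else if p < #T1 then {p - #T0} else
    {#T1 - #T0 + 2 * (p - #T1), #T1 - #T0 + 2 * (p - #T1) + 1} with hS
  set E : ℕ → Finset ℕ := fun p => if p < #T0 then E0 (f p) else if p < #T1 then E1 (f p) else
    E2 (f p) with hE
  have hEB : ∀ p, E p ⊆ B (f p) := by
    intro p
    simp only [hE]
    split_ifs
    · exact hB0 _
    · exact hB1 _
    · exact hB2 _
  have hSs : ∀ p ≤ s, S p ⊆ range (s+1) := by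
    intro p hp x hx
    simp only [hS] at hx
    rw [mem_range]
    split_ifs at hx
    · simp at hx
    · simp at hx; omega
    · simp at hx; omega
  apply hN
  refine ⟨fun p => S p ∪ eUp s (E p), ?_, ?_⟩
  · intro p
    have hp : (p:ℕ) ≤ s := by omega
    have h3 := hSs p hp
    by_cases h0 : (p:ℕ) < #T0
    · apply eK_mem (m0 (f p) (g0 p h0)) (S := S p) h3 _ |> fun h => by simpa [hE, h0] using h
      simp [hS, h0]
    · by_cases h1 : (p:ℕ) < #T1
      · apply eK_mem (m1 (f p) (g1 p h1)) (S := S p) h3 _ |> fun h => by simpa [hE, h0, h1] using h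
        simp [hS, h0, h1]
      · apply eK_mem (m2 (f p) (a2 p (by omega))) (S := S p) h3 _ |> fun h => by simpa [hE, h0, h1] using h
        simp [hS, h0, h1]
  · intro p r hpr
    have hp : (p:ℕ) ≤ s := by omega
    have hr : (r:ℕ) ≤ s := by omega
    have hpr' : (p:ℕ) ≠ r := fun h => hpr (Fin.ext h)
    apply e_disj_up (hSs p hp) (hSs r hr)
    · rw [disjoint_left]
      intro x hx hy
      simp only [hS] at hx hy
      split_ifs at hx hy <;> simp at hx hy <;> omega
    · refine Disjoint.mono (hEB p) (hEB r) (hd _ (a2 _ (by omega)) _ (a2 _ (by omega)) ?_)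
      intro h
      exact hpr' (b2 _ (by omega) _ (by omega) h)

theorem e_cheb {p η X : ℝ} (hp : 0 < p) (hη : 0 < η) (h : X < (1 - η) * p) :
    η^2 ≤ (X - p)^2 * (1 / p^2) := by
  have h1 : η * p ≤ p - X := by linarith
  have h2 : (η * p)^2 ≤ (p - X)^2 := pow_le_pow_left₀ (by positivity) h1 2
  have h3 : η^2 = (η * p)^2 * (1/p^2) := by field_simp
  rw [h3, show (X - p)^2 = (p - X)^2 by ring]
  exact mul_le_mul_of_nonneg_right h2 (by positivity)

theorem e_partF1 {F : Finset (Finset ℕ)} {s N q t : ℕ} {η p0 p1 p2 : ℝ} (hF : EShifted F) (hN : ENoMat F s)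
    (ht : t * (q+2) ≤ N)
    (h0 : p0 = (#(eK F s N (q+2) 0) : ℝ) / N.choose (q+2) * t)
    (h1 : p1 = (#(eK F s N (q+1) 1) : ℝ) / N.choose (q+1) * t)
    (h2 : p2 = (#(eK F s N q 2) : ℝ) / N.choose q * t) (hη : 0 < η)
    (g0 : 3 < η^2 * p0) (g1 : 3 < η^2 * p1) (g2 : 3 < η^2 * p2)
    (k2 : s + 1 ≤ (1 - η) * p2) (k01 : s + 1 ≤ (1 - η) * (p0 + p1)) : False := by
  set b : ℕ → ℕ → Finset ℕ := fun m i => Finset.Ico (i * (q+2)) (i * (q+2) + m) with hbdef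
  have hb : ∀ m ≤ q+2, ∀ i < t, b m i ∈ (range N).powersetCard m := by
    intro m hm i hi
    rw [mem_powersetCard]
    constructor
    · intro x hx
      simp only [hbdef, Finset.mem_Ico] at hx
      have : (i+1) * (q+2) ≤ t * (q+2) := Nat.mul_le_mul_right _ hi
      rw [mem_range]
      nlinarith
    · simp [hbdef]
  have hd' : ∀ m ≤ q+2, ∀ i j, i < j → Disjoint (b m i) (b m j) := by
    intro m hm i j hij
    rw [disjoint_left]
    intro x hx hy
    simp only [hbdef, Finset.mem_Ico] at hx hy
    have : (i+1) * (q+2) ≤ j * (q+2) := Nat.mul_le_mul_right _ hij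
    nlinarith
  have hd : ∀ m ≤ q+2, ∀ i < t, ∀ j < t, i ≠ j → Disjoint (b m i) (b m j) := by
    intro m hm i _ j _ hij
    rcases lt_or_gt_of_ne hij with h | h
    · exact hd' m hm i j h
    · exact (hd' m hm j i h).symm
  have hbe : ∀ m i, b (m+1) i = insert (i * (q+2) + m) (b m i) := by
    intro m i; ext x; simp only [hbdef, Finset.mem_Ico, mem_insert]; omega
  have hbn : ∀ m i, i * (q+2) + m ∉ b m i := by
    intro m i; simp [hbdef]
  have hstep : ∀ m c, ∀ σ : Equiv.Perm (Fin N),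
      eX (eK F s N (m+1) c) (b (m+1)) t σ ⊆ eX (eK F s N m (c+1)) (b m) t σ := by
    intro m c σ i hi
    simp only [eX, mem_filter] at hi ⊢
    refine ⟨hi.1, ?_⟩
    have hx : eAct σ (i * (q+2) + m) ∈ eImg σ (b (m+1) i) := by
      rw [hbe]; exact mem_image_of_mem _ (mem_insert_self _ _)
    have := eK_erase hF _ hi.2 _ hx
    convert this using 1
    rw [hbe]
    unfold eImg
    rw [image_insert, erase_insert]
    intro h
    obtain ⟨y, hy, hy'⟩ := mem_image.mp h
    exact hbn m i (eAct_inj σ hy' ▸ hy)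
  have hsubb : ∀ m ≤ q+2, ∀ (σ : Equiv.Perm (Fin N)) i, eImg σ (b m i) ⊆ eImg σ (b (q+2) i) := by
    intro m hm σ i
    apply image_subset_image
    intro x hx
    simp only [hbdef, Finset.mem_Ico] at hx ⊢
    omega
  set W := (Fintype.card (Equiv.Perm (Fin N)) : ℝ) with hW
  have hWpos : 0 < W := by rw [hW]; exact_mod_cast Fintype.card_pos
  have v0 := (e_conc (eK F s N (q+2) 0) eK_sub (eK_shifted hF) (b (q+2)) (hb _ le_rfl) (hd _ le_rfl)).2
  have v1 := (e_conc (eK F s N (q+1) 1) eK_sub (eK_shifted hF) (b (q+1)) (hb _ (by omega)) (hd _ (by omega))).2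
  have v2 := (e_conc (eK F s N q 2) eK_sub (eK_shifted hF) (b q) (hb _ (by omega)) (hd _ (by omega))).2
  rw [← h0] at v0
  rw [← h1] at v1
  rw [← h2] at v2
  have pp : ∀ p : ℝ, 3 < η^2 * p → 0 < p := by
    intro p hp
    by_contra h
    have : η^2 * p ≤ 0 := mul_nonpos_of_nonneg_of_nonpos (by positivity) (not_lt.mp h)
    linarith
  have pos0 := pp _ g0
  have pos1 := pp _ g1
  have pos2 := pp _ g2
  have hpt : ∀ σ : Equiv.Perm (Fin N), η^2 ≤
      ((#(eX (eK F s N (q+2) 0) (b (q+2)) t σ) : ℝ) - p0)^2 * (1/p0^2) +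
      ((#(eX (eK F s N (q+1) 1) (b (q+1)) t σ) : ℝ) - p1)^2 * (1/p1^2) +
      ((#(eX (eK F s N q 2) (b q) t σ) : ℝ) - p2)^2 * (1/p2^2) := by
    intro σ
    have n0 : 0 ≤ ((#(eX (eK F s N (q+2) 0) (b (q+2)) t σ) : ℝ) - p0)^2 * (1/p0^2) := by positivity
    have n1 : 0 ≤ ((#(eX (eK F s N (q+1) 1) (b (q+1)) t σ) : ℝ) - p1)^2 * (1/p1^2) := by positivity
    have n2 : 0 ≤ ((#(eX (eK F s N q 2) (b q) t σ) : ℝ) - p2)^2 * (1/p2^2) := by positivity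
    by_cases c0 : (#(eX (eK F s N (q+2) 0) (b (q+2)) t σ) : ℝ) < (1 - η) * p0
    · have := e_cheb pos0 hη c0; linarith
    by_cases c1 : (#(eX (eK F s N (q+1) 1) (b (q+1)) t σ) : ℝ) < (1 - η) * p1
    · have := e_cheb pos1 hη c1; linarith
    by_cases c2 : (#(eX (eK F s N q 2) (b q) t σ) : ℝ) < (1 - η) * p2
    · have := e_cheb pos2 hη c2; linarith
    exfalso
    push Not at c0 c1 c2
    have hc2 : s + 1 ≤ #(eX (eK F s N q 2) (b q) t σ) := by
      have : (s:ℝ) + 1 ≤ #(eX (eK F s N q 2) (b q) t σ) := by linarith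
      exact_mod_cast this
    have := e_cost (q := q) hN (fun i => eImg σ (b (q+2) i)) (fun i => eImg σ (b (q+2) i))
      (fun i => eImg σ (b (q+1) i)) (fun i => eImg σ (b q i)) _ _ _ (hstep (q+1) 0 σ) (hstep q 1 σ)
      (by
        intro i hi j hj hij
        simp only [eX, mem_filter, mem_range] at hi hj
        exact eImg_disj σ (hd _ le_rfl i hi.1 j hj.1 hij))
      (fun i => subset_rfl) (hsubb _ (by omega) σ) (hsubb _ (by omega) σ)
      (by intro i hi; simp only [eX, mem_filter] at hi; exact hi.2)
      (by intro i hi; simp only [eX, mem_filter] at hi; exact hi.2)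
      (by intro i hi; simp only [eX, mem_filter] at hi; exact hi.2) hc2
    have h' : (#(eX (eK F s N (q+2) 0) (b (q+2)) t σ) : ℝ) + #(eX (eK F s N (q+1) 1) (b (q+1)) t σ) ≤ s := by
      exact_mod_cast this
    linarith
  have hsum := sum_le_sum (fun σ (_ : σ ∈ (univ : Finset (Equiv.Perm (Fin N)))) => hpt σ)
  rw [sum_add_distrib, sum_add_distrib, ← sum_mul, ← sum_mul, ← sum_mul] at hsum
  simp only [sum_const, card_univ, nsmul_eq_mul] at hsum
  rw [← hW] at hsum
  have key : ∀ p V : ℝ, 0 < p → 3 < η^2 * p → V ≤ W * p → V * (1/p^2) < W * (η^2/3) := by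
    intro p V hp hp3 hV
    have e1 : V * (1/p^2) ≤ W * p * (1/p^2) := mul_le_mul_of_nonneg_right hV (by positivity)
    have e2 : W * p * (1/p^2) = W * (1/p) := by field_simp
    have e3 : 1/p < η^2/3 := by
      rw [div_lt_div_iff₀ hp (by norm_num)]; linarith
    have e4 := mul_lt_mul_of_pos_left e3 hWpos
    linarith
  have := key _ _ pos0 g0 v0
  have := key _ _ pos1 g1 v1
  have := key _ _ pos2 g2 v2
  linarith

theorem e_partF2 {F : Finset (Finset ℕ)} {s N q : ℕ} {γ x y : ℝ} (hF : EShifted F) (hN : ENoMat F s)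
    (hk : ∀ A ∈ F, #A = q+2) (hx : 0 < x) (hx1 : x < 1) (hxγ : 2 * x < γ - 1)
    (hNs : γ * s * (q+1) ≤ N + 1) (hs : 1 ≤ x * s) (hy : 0 < y) (hs2 : 3 < x^2 * (s * y))
    (k2 : 1 + x ≤ (1 - x) * ((γ - 2 * x)^2 * y)) (k01 : 1 + x ≤ (1 - x) * ((1 + (γ - 2 * x)) * y)) :
    (#(eK F s N (q+2) 0) : ℝ) / N.choose (q+1) ≤ s * y := by
  by_contra hcon
  push Not at hcon
  set Φ := (#(eK F s N (q+2) 0) : ℝ) / N.choose (q+1) with hΦ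
  have hs0 : (0:ℝ) < s := by
    by_contra h
    have : x * s ≤ 0 := mul_nonpos_of_nonneg_of_nonpos hx.le (not_lt.mp h)
    linarith
  have hΦ0 : 0 < Φ := lt_trans (by positivity) hcon
  set g := γ - 2 * x with hg
  have hg1 : 1 < g := by linarith
  have hl : (0:ℝ) < q + 1 := by positivity
  have hNl : g * (s * (q+1)) ≤ N - (q+1) := by
    have : (q+1:ℝ) ≤ x * s * (q+1) := by nlinarith
    have h1 : (1:ℝ) ≤ q + 1 := by have : (0:ℝ) ≤ q := Nat.cast_nonneg q
                                  linarith
    rw [hg]; nlinarith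
  have hNlpos : (0:ℝ) < N - (q+1) := lt_of_lt_of_le (by positivity) hNl
  have hNl' : q + 1 < N := by
    have : ((q+1 : ℕ):ℝ) < N := by push_cast; linarith
    exact_mod_cast this
  set t := N / (q+2) with htdef
  have ht : t * (q+2) ≤ N := Nat.div_mul_le_self _ _
  have ht2 : (N:ℝ) - (q+1) ≤ t * (q+2) := by
    have : N < t * (q+2) + (q+2) := by
      have := Nat.lt_div_mul_add (a := N) (b := q+2) (by omega)
      simpa [htdef] using this
    have : N + 1 ≤ t * (q+2) + (q+2) := this
    have : ((N:ℝ) + 1) ≤ t * (q+2) + (q+2) := by exact_mod_cast this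
    linarith
  have ht0 : (0:ℝ) ≤ t := Nat.cast_nonneg _
  have c1pos : (0:ℝ) < N.choose (q+1) := by exact_mod_cast Nat.choose_pos (by omega)
  have c2pos : (0:ℝ) < N.choose (q+2) := by exact_mod_cast Nat.choose_pos (by omega)
  have c0pos : (0:ℝ) < N.choose q := by exact_mod_cast Nat.choose_pos (by omega)
  have r2 : (N.choose (q+2) : ℝ) * (q+2) = N.choose (q+1) * (N - (q+1)) := by
    have := Nat.choose_succ_right_eq N (q+1)
    have h : ((N.choose (q+1+1) * (q+1+1) : ℕ) : ℝ) = ((N.choose (q+1) * (N - (q+1)) : ℕ) : ℝ) := by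
      exact_mod_cast this
    rw [Nat.cast_mul, Nat.cast_mul, Nat.cast_sub hNl'.le] at h
    push_cast at h
    rw [← h]; ring
  have r1 : (N.choose (q+1) : ℝ) * (q+1) = N.choose q * (N - q) := by
    have := Nat.choose_succ_right_eq N q
    have h : ((N.choose (q+1) * (q+1) : ℕ) : ℝ) = ((N.choose q * (N - q) : ℕ) : ℝ) := by
      exact_mod_cast this
    rw [Nat.cast_mul, Nat.cast_mul, Nat.cast_sub (by omega)] at h
    push_cast at h
    exact h
  set k0 := (#(eK F s N (q+2) 0) : ℝ) with hk0
  set k1 := (#(eK F s N (q+1) 1) : ℝ) with hk1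
  set k2' := (#(eK F s N q 2) : ℝ) with hk2
  have i0 := eK0_le (N := N) hF hk hN
  have i1 := eK1_le (N := N) hF hk hN
  rw [← hk0, ← hk1] at i0
  rw [← hk1, ← hk2] at i1
  have P0 : Φ ≤ k0 / N.choose (q+2) * t := by
    rw [hΦ, div_mul_eq_mul_div, div_le_div_iff₀ c1pos c2pos]
    have hk0n : 0 ≤ k0 := Nat.cast_nonneg _
    have h1 : (N.choose (q+2) : ℝ) * (q+2) ≤ N.choose (q+1) * (t * (q+2)) := by
      rw [r2]; exact mul_le_mul_of_nonneg_left ht2 c1pos.le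
    have h2 : (N.choose (q+2) : ℝ) ≤ N.choose (q+1) * t := by
      have h5 : (0:ℝ) < q + 2 := by positivity
      refine le_of_mul_le_mul_right ?_ h5
      linarith only [h1]
    have h3 := mul_le_mul_of_nonneg_left h2 hk0n
    linarith only [h3]
  set α := k1 / N.choose (q+1) with hα
  have hα0 : 0 ≤ α := div_nonneg (Nat.cast_nonneg _) c1pos.le
  have P1 : g * Φ ≤ α * t := by
    have h1 : Φ * (q+2) ≤ (q+1) * s * α := by
      rw [hΦ, hα, div_mul_eq_mul_div, ← mul_div_assoc]
      apply div_le_div_of_nonneg_right _ c1pos.le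
      have : (q+1:ℝ)/(q+2) * s * k1 * (q+2) = (q+1) * s * k1 := by field_simp
      rw [← this]
      exact mul_le_mul_of_nonneg_right i0 (by positivity)
    have h2 : g * (s * (q+1)) * α ≤ t * (q+2) * α := mul_le_mul_of_nonneg_right (hNl.trans ht2) hα0
    have h3 : g * (Φ * (q+2)) ≤ g * ((q+1) * s * α) := mul_le_mul_of_nonneg_left h1 (by linarith)
    have h5 : (0:ℝ) < q + 2 := by positivity
    refine le_of_mul_le_mul_right ?_ h5
    linarith only [h2, h3]
  have P2 : g * α ≤ k2' / N.choose q := by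
    rw [hα, ← mul_div_assoc, div_le_div_iff₀ c1pos c0pos]
    have hk2n : 0 ≤ k2' := Nat.cast_nonneg _
    have h1 : g * (s * (q+1)) * N.choose q ≤ N.choose (q+1) * (q+1) := by
      rw [r1, mul_comm]
      exact mul_le_mul_of_nonneg_left (by linarith) c0pos.le
    have h1' : g * s * N.choose q ≤ N.choose (q+1) := by
      refine le_of_mul_le_mul_right ?_ hl
      linarith only [h1]
    have h3 : g * k1 * N.choose q ≤ g * (s * k2') * N.choose q := by gcongr
    have h6 := mul_le_mul_of_nonneg_right h1' hk2n
    linarith only [h3, h6]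
  have P2' : g^2 * Φ ≤ k2' / N.choose q * t := by
    have h1 := mul_le_mul_of_nonneg_right P2 ht0
    have h2 := mul_le_mul_of_nonneg_left P1 (show 0 ≤ g by linarith)
    linarith only [h1, h2]
  have hΦg : Φ ≤ g * Φ := le_mul_of_one_le_left hΦ0.le hg1.le
  have hΦg2 : g * Φ ≤ g^2 * Φ := by
    have := mul_le_mul_of_nonneg_left hΦg (show 0 ≤ g by linarith)
    linarith only [this]
  have hxx : 0 < x^2 := by positivity
  have b0 : 3 < x^2 * Φ := hs2.trans (mul_lt_mul_of_pos_left hcon hxx)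
  have b1 : ∀ p, Φ ≤ p → 3 < x^2 * p := by intro p hp; exact b0.trans_le (mul_le_mul_of_nonneg_left hp hxx.le)
  have s1 : (s:ℝ) + 1 ≤ s * (1 + x) := by linarith
  refine e_partF1 hF hN ht rfl rfl rfl hx (b1 _ P0) (b1 _ (hΦg.trans P1)) (b1 _ (hΦg.trans (hΦg2.trans P2'))) ?_ ?_
  · have h1 : (1 - x) * (g^2 * (s * y)) ≤ (1 - x) * (g^2 * Φ) := by
      apply mul_le_mul_of_nonneg_left _ (by linarith)
      exact mul_le_mul_of_nonneg_left hcon.le (by positivity)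
    have h2 := mul_le_mul_of_nonneg_left P2' (show 0 ≤ 1 - x by linarith)
    have h3 := mul_le_mul_of_nonneg_left k2 hs0.le
    linarith only [h1, h2, h3, s1]
  · have h1 : (1 - x) * ((1 + g) * (s * y)) ≤ (1 - x) * ((1 + g) * Φ) := by
      apply mul_le_mul_of_nonneg_left _ (by linarith)
      exact mul_le_mul_of_nonneg_left hcon.le (by linarith)
    have h2 := mul_le_mul_of_nonneg_left (add_le_add P0 P1) (show 0 ≤ 1 - x by linarith)
    have h3 := mul_le_mul_of_nonneg_left k01 hs0.le
    linarith only [h1, h2, h3, s1]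

theorem e_partF {γ y : ℝ} (hγ : 1 < γ) (hy : 0 < y) (h1 : 1 < γ^2 * y) (h2 : 1 < (1 + γ) * y) :
    ∃ s₀ : ℕ, ∀ (F : Finset (Finset ℕ)) (s N q : ℕ), s₀ ≤ s → EShifted F → ENoMat F s →
      (∀ A ∈ F, #A = q+2) → γ * s * (q+1) ≤ N + 1 →
      (#(eK F s N (q+2) 0) : ℝ) / N.choose (q+1) ≤ s * y := by
  have hx : ∃ x : ℝ, 0 < x ∧ x < 1 ∧ 2 * x < γ - 1 ∧ 1 + x < (1 - x) * ((γ - 2 * x)^2 * y) ∧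
      1 + x < (1 - x) * ((1 + (γ - 2 * x)) * y) := by
    have e1 : ∀ᶠ x : ℝ in nhds 0, 1 + x < (1 - x) * ((γ - 2 * x)^2 * y) := by
      apply Filter.Tendsto.eventually_lt (f := fun x : ℝ => 1 + x)
        (g := fun x : ℝ => (1 - x) * ((γ - 2 * x)^2 * y)) (y := 1 + 0) (z := (1 - 0) * ((γ - 2 * 0)^2 * y))
      · exact Continuous.tendsto (f := fun x : ℝ => 1 + x) (by fun_prop) 0
      · exact Continuous.tendsto (f := fun x : ℝ => (1 - x) * ((γ - 2 * x)^2 * y)) (by fun_prop) 0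
      · simpa using h1
    have e2 : ∀ᶠ x : ℝ in nhds 0, 1 + x < (1 - x) * ((1 + (γ - 2 * x)) * y) := by
      apply Filter.Tendsto.eventually_lt (f := fun x : ℝ => 1 + x)
        (g := fun x : ℝ => (1 - x) * ((1 + (γ - 2 * x)) * y)) (y := 1 + 0) (z := (1 - 0) * ((1 + (γ - 2 * 0)) * y))
      · exact Continuous.tendsto (f := fun x : ℝ => 1 + x) (by fun_prop) 0
      · exact Continuous.tendsto (f := fun x : ℝ => (1 - x) * ((1 + (γ - 2 * x)) * y)) (by fun_prop) 0
      · simpa using h2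
    obtain ⟨δ, hδ, hb⟩ := Metric.eventually_nhds_iff.mp (e1.and e2)
    have hm : 0 < min δ (min 1 (γ - 1)) := by
      apply lt_min hδ (lt_min one_pos (by linarith))
    set m := min δ (min 1 (γ - 1)) with hmdef
    have l1 : m ≤ δ := min_le_left _ _
    have l2 : m ≤ 1 := (min_le_right _ _).trans (min_le_left _ _)
    have l3 : m ≤ γ - 1 := (min_le_right _ _).trans (min_le_right _ _)
    have := hb (y := m / 4) (by rw [Real.dist_eq, sub_zero, abs_of_pos (by linarith)]; linarith)
    exact ⟨m/4, by linarith, by linarith, by linarith, this.1, this.2⟩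
  obtain ⟨x, x0, x1, x2, x3, x4⟩ := hx
  obtain ⟨s₁, hs1⟩ := exists_nat_gt (1 / x)
  obtain ⟨s₂, hs2⟩ := exists_nat_gt (3 / (x^2 * y))
  refine ⟨max s₁ s₂, ?_⟩
  intro F s N q hs hF hN hk hNs
  have a1 : (s₁ : ℝ) ≤ s := by exact_mod_cast (le_max_left _ _).trans hs
  have a2 : (s₂ : ℝ) ≤ s := by exact_mod_cast (le_max_right _ _).trans hs
  refine e_partF2 hF hN hk x0 x1 x2 hNs ?_ hy ?_ x3.le x4.le
  · have := hs1.trans_le a1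
    rw [div_lt_iff₀ x0] at this; linarith
  · have := hs2.trans_le a2
    rw [div_lt_iff₀ (by positivity)] at this; linarith


theorem e_num {γ : ℝ} (h1 : 1 < γ) (h2 : γ ≤ 5/3) : ∃ ε y0 : ℝ, 0 < ε ∧ ε * γ ≤ γ - 1 ∧ 0 < y0 ∧
    1 < γ^2 * y0 ∧ 1 < (1 + γ) * y0 ∧ ∀ (q : ℕ) (y : ℝ), y ≤ (q+1:ℝ)/(q+2) * (1/γ + ε) → y ≤ y0 →
      y ≤ 1 - 1/γ - ε + (5 - 3*γ)/2 * (γ * (q+1) / (γ * (q+1) + 1)) := by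
  have hg0 : 0 < γ := by linarith
  by_cases hc : γ ≤ 1.3
  · refine ⟨(γ-1)*(4-3*γ)/(4*γ), 2, ?_, ?_, by norm_num, by nlinarith, by linarith, ?_⟩
    · apply div_pos (mul_pos (by linarith) (by linarith)) (by linarith)
    · have : (γ-1)*(4-3*γ)/(4*γ) * γ = (γ-1)*(4-3*γ)/4 := by field_simp
      rw [this]; nlinarith
    · intro q y hy _
      set ε := (γ-1)*(4-3*γ)/(4*γ) with hε
      have hεpos : 0 < ε := div_pos (mul_pos (by linarith) (by linarith)) (by linarith)
      have hq : (0:ℝ) ≤ q := Nat.cast_nonneg q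
      set r' := (q+1:ℝ)/(q+2) with hr'
      have r0 : 0 ≤ r' := by positivity
      have r1 : r' ≤ 1 := by rw [hr', div_le_one (by positivity)]; linarith
      have rr : r' ≤ γ * (q+1) / (γ * (q+1) + 1) := by
        rw [hr', div_le_div_iff₀ (by positivity) (by positivity)]
        nlinarith
      have m1 : (5 - 3*γ)/2 * r' ≤ (5 - 3*γ)/2 * (γ * (q+1) / (γ * (q+1) + 1)) :=
        mul_le_mul_of_nonneg_left rr (by linarith)
      have m2 : r' * ε ≤ ε := mul_le_of_le_one_left hεpos.le r1
      have k1 : 2 * ε ≤ 1 - 1/γ := by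
        have : 1 - 1/γ - 2 * ε = (γ-1)*(3*γ-2)/(2*γ) := by rw [hε]; field_simp; ring
        have : 0 ≤ (γ-1)*(3*γ-2)/(2*γ) := div_nonneg (mul_nonneg (by linarith) (by linarith)) (by linarith)
        linarith
      have k2 : 2 * ε = 1 - 2 * (1/γ) + (5-3*γ)/2 := by rw [hε]; field_simp; ring
      set μ := 1/γ with hμ
      rcases le_total (μ - (5-3*γ)/2) 0 with h | h
      · have := mul_nonpos_of_nonneg_of_nonpos r0 h
        linarith
      · have := mul_le_of_le_one_left h r1
        linarith
  · push Not at hc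
    refine ⟨0.005, max (1/(1+γ)) (1/γ^2) + 0.005, by norm_num, by linarith, by positivity, ?_, ?_, ?_⟩
    · have : 1/γ^2 ≤ max (1/(1+γ)) (1/γ^2) := le_max_right _ _
      have h3 : γ^2 * (1/γ^2) = 1 := by field_simp
      nlinarith [mul_le_mul_of_nonneg_left this (sq_nonneg γ)]
    · have : 1/(1+γ) ≤ max (1/(1+γ)) (1/γ^2) := le_max_left _ _
      have h3 : (1+γ) * (1/(1+γ)) = 1 := by field_simp
      nlinarith [mul_le_mul_of_nonneg_left this (show 0 ≤ 1 + γ by linarith)]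
    · intro q y hy1 hy2
      rcases Nat.eq_zero_or_pos q with hq | hq
      · subst hq
        refine hy1.trans ?_
        norm_num
        have e1 : (5 - 3*γ)/2 * (γ / (γ + 1)) = ((5-3*γ)*γ) / (2*(γ+1)) := by field_simp
        have key : 3/2 * γ⁻¹ + 0.0075 ≤ 1 + ((5-3*γ)*γ) / (2*(γ+1)) := by
          rw [← sub_nonneg]
          have : 1 + ((5-3*γ)*γ) / (2*(γ+1)) - (3/2 * γ⁻¹ + 0.0075) =
            (0.9925 * (2 * γ*(γ+1)) + (5-3*γ)*γ^2 - 3*(γ+1))/(2*γ*(γ+1)) := by field_simp; try ring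
          rw [this]
          apply div_nonneg _ (by positivity)
          nlinarith [mul_nonneg (sub_nonneg.mpr hc.le) (sub_nonneg.mpr h2), mul_nonneg hg0.le (mul_nonneg (sub_nonneg.mpr hc.le) (sub_nonneg.mpr h2))]
        rw [e1]; norm_num at key ⊢; linarith
      · refine hy2.trans ?_
        have hq1 : (1:ℝ) ≤ q := by exact_mod_cast hq
        have rr : 2 * γ / (2 * γ + 1) ≤ γ * (q+1) / (γ * (q+1) + 1) := by
          rw [div_le_div_iff₀ (by positivity) (by positivity)]
          nlinarith
        have m1 := mul_le_mul_of_nonneg_left rr (show 0 ≤ (5-3*γ)/2 by linarith)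
        have key : max (1/(1+γ)) (1/γ^2) ≤ 0.99 - 1/γ + (5-3*γ)/2 * (2 * γ / (2 * γ + 1)) := by
          apply max_le
          · rw [← sub_nonneg]
            have : 0.99 - 1/γ + (5-3*γ)/2 * (2 * γ / (2 * γ + 1)) - 1/(1+γ) =
              (0.99 * (γ*(2*γ+1)*(1+γ)) - (2*γ+1)*(1+γ) + (5-3*γ)*γ^2*(1+γ) - γ*(2*γ+1))/(γ*(2*γ+1)*(1+γ)) := by
              field_simp
              try ring
            rw [this]
            apply div_nonneg _ (by positivity)
            have w := mul_nonneg (sub_nonneg.mpr hc.le) (sub_nonneg.mpr h2)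
            nlinarith [mul_nonneg hg0.le w, mul_nonneg (sq_nonneg γ) w]
          · rw [← sub_nonneg]
            have : 0.99 - 1/γ + (5-3*γ)/2 * (2 * γ / (2 * γ + 1)) - 1/γ^2 =
              (-3*γ^4+6.98*γ^3-1.01*γ^2-3*γ-1)/(γ^2*(2*γ+1)) := by
              field_simp
              try ring
            rw [this]
            apply div_nonneg _ (by positivity)
            have w := mul_nonneg (sub_nonneg.mpr hc.le) (sub_nonneg.mpr h2)
            nlinarith [mul_nonneg hg0.le w, mul_nonneg (sq_nonneg γ) w]
        have e3 : (0.99:ℝ) = 1 - 0.005 - 0.005 := by norm_num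
        rw [e3] at key
        linarith only [key, m1]

set_option maxHeartbeats 1000000 in
theorem e_core {γ : ℝ} (hγ1 : 1 < γ) (hγ2 : γ ≤ 5/3) : ∃ s₀ : ℕ, ∀ (F : Finset (Finset ℕ)) (s N q : ℕ),
    s₀ ≤ s → EShifted F → ENoMat F s → F ⊆ (range (N+(s+1))).powersetCard (q+2) →
    γ * s * (q+1) ≤ N + 1 →
    (#F : ℝ) ≤ ((N+(s+1)).choose (q+2) : ℝ) -
      (γ - 1)/2 * ((5 * (q+2) - 2)/(γ * (q+2) - (γ - 1))) * ((N+1).choose (q+2) : ℝ) := by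
  obtain ⟨ε, y0, hε, hεγ, hy0, hya, hyb, hnum⟩ := e_num hγ1 hγ2
  obtain ⟨s1, hs1⟩ := e_partF hγ1 hy0 hya hyb
  have hg0 : 0 < γ := by linarith
  set e := ε * γ with he
  have he0 : 0 < e := by positivity
  obtain ⟨s2, hs2⟩ := exists_nat_gt ((12 + 2 * ((1 + e/2) / (e/4)^2) + 2 * (1/γ + ε)) / e)
  obtain ⟨s3, hs3⟩ := exists_nat_gt (3 / (γ - 1))
  refine ⟨max s1 (max s2 s3), ?_⟩
  intro F s N q hs hF hN hsub hNs
  have hF1 := hs1 F s N q ((le_max_left _ _).trans hs) hF hN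
    (fun A hA => (mem_powersetCard.mp (hsub hA)).2) hNs
  have a2 : (s2 : ℝ) ≤ s := by exact_mod_cast ((le_max_left _ _).trans (le_max_right _ _)).trans hs
  have a3 : (s3 : ℝ) ≤ s := by exact_mod_cast ((le_max_right _ _).trans (le_max_right _ _)).trans hs
  have b2 := hs2.trans_le a2
  have b3 := hs3.trans_le a3
  rw [div_lt_iff₀ he0] at b2
  rw [div_lt_iff₀ (by linarith)] at b3
  have hLp : 0 < (1 + e/2) / (e/4)^2 := by positivity
  have hμ : 0 < 1/γ + ε := by positivity
  have d1 : 12 ≤ e * s := by linarith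
  have d2 : 2 * ((1 + e/2) / (e/4)^2) ≤ e * s := by linarith
  have d3 : 2 * (1/γ + ε) ≤ e * s := by linarith
  have d4 : 3 ≤ (γ - 1) * s := by linarith
  have hs0 : (0:ℝ) < s := by
    by_contra h
    have : e * s ≤ 0 := mul_nonpos_of_nonneg_of_nonpos he0.le (not_lt.mp h)
    linarith
  have hq0 : (0:ℝ) ≤ q := Nat.cast_nonneg q
  have hNq : q + 1 ≤ N := by
    have : (q:ℝ) + 1 < N + 1 := by
      have : 3 ≤ γ * s := by nlinarith
      nlinarith
    have : q + 1 < N + 1 := by exact_mod_cast this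
    omega
  have cpos : (0:ℝ) < N.choose (q+1) := by exact_mod_cast Nat.choose_pos hNq
  have hcount : (#F : ℝ) + N.choose (q+2) + (s+1) * N.choose (q+1) ≤
      ((N+(s+1)).choose (q+2) : ℝ) + #(eK F s N (q+2) 0) + ∑ i ∈ range (s+1), (#(eLS F s N (q+1) {i}) : ℝ) := by
    exact_mod_cast e_count hsub
  have hi0 := eK0_le (N := N) hF (fun A hA => (mem_powersetCard.mp (hsub hA)).2) hN
  have hpas : ((N+1).choose (q+2) : ℝ) = N.choose (q+1) + N.choose (q+2) := by
    exact_mod_cast Nat.choose_succ_succ N (q+1)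
  have hmul : ((N:ℝ)+1) * N.choose (q+1) = (N+1).choose (q+2) * (q+2) := by
    have := Nat.add_one_mul_choose_eq N (q+1)
    have h' : (((N+1) * N.choose (q+1) : ℕ):ℝ) = (((N+1).choose (q+2) * (q+2) : ℕ) : ℝ) := by
      exact_mod_cast this
    push_cast at h'
    exact h'
  set c := (N.choose (q+1) : ℝ) with hc
  set Z := ((N+1).choose (q+2) : ℝ) with hZ
  set α := (#(eK F s N (q+1) 1) : ℝ) / c with hα
  set Φ := (#(eK F s N (q+2) 0) : ℝ) / c with hΦ
  set A := ∑ i ∈ range (s+1), (#(eLS F s N (q+1) {i}) : ℝ) / c with hA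
  have hα0 : 0 ≤ α := by positivity
  have hΦc : (#(eK F s N (q+2) 0) : ℝ) = Φ * c := by rw [hΦ, div_mul_cancel₀ _ cpos.ne']
  have hAc : ∑ i ∈ range (s+1), (#(eLS F s N (q+1) {i}) : ℝ) = A * c := by
    rw [hA, ← sum_div, div_mul_cancel₀ _ cpos.ne']
  set ρ := (q+1:ℝ)/(q+2) with hρ
  have hρ0 : 0 ≤ ρ := by positivity
  have hρ1 : ρ ≤ 1 := by rw [hρ, div_le_one (by positivity)]; linarith
  have hΦα : Φ ≤ ρ * s * α := by
    rw [hΦ, hα, ← mul_div_assoc]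
    exact div_le_div_of_nonneg_right hi0 cpos.le
  have hαμ : α ≤ 1/γ + ε := by
    have h1 := (e_partD (e := e) (c := 0) hF hN hγ1 d4 hNs).1
    rw [← hc, ← hα] at h1
    have h2 : (s:ℝ) ≤ (1/γ + ε) * (γ * s - 2) := by
      have : (1/γ + ε) * (γ * s - 2) = s + e * s - 2 * (1/γ + ε) := by rw [he]; field_simp; try ring
      linarith
    have h3 : 0 < γ * s - 2 := by nlinarith
    exact le_of_mul_le_mul_right (h1.trans h2) h3
  set κ := (γ - 1)/2 * ((5 * ((q:ℝ)+2) - 2)/(γ * (q+2) - (γ - 1))) with hκ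
  have hden : γ * ((q:ℝ)+2) - (γ - 1) = γ * (q+1) + 1 := by ring
  have hκ1 : 1 - κ = (q+2) * (5 - 3*γ) / (2 * (γ * (q+1) + 1)) := by
    rw [hκ, hden]
    have : (0:ℝ) < γ * (q+1) + 1 := by positivity
    field_simp; ring
  have hκ0 : 0 ≤ 1 - κ := by
    rw [hκ1]; apply div_nonneg (mul_nonneg (by positivity) (by linarith)) (by positivity)
  set Δ := (1 - κ) * ((N:ℝ)+1)/(q+2) with hΔ
  have hΔ0 : 0 ≤ Δ := by rw [hΔ]; positivity
  have hΔZ : Δ * c = (1 - κ) * Z := by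
    rw [hΔ]
    have h5 : (0:ℝ) < q + 2 := by positivity
    rw [div_mul_eq_mul_div, div_eq_iff h5.ne']
    linear_combination (1 - κ) * hmul
  have hΔD : s * ((5 - 3*γ)/2 * (γ * (q+1) / (γ * (q+1) + 1))) ≤ Δ := by
    have h1 : (1 - κ) * (γ * s * (q+1)) / (q+2) ≤ Δ := by
      rw [hΔ]
      apply div_le_div_of_nonneg_right _ (by positivity)
      exact mul_le_mul_of_nonneg_left hNs hκ0
    refine le_trans (le_of_eq ?_) h1
    rw [hκ1]
    have : (0:ℝ) < γ * (q+1) + 1 := by positivity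
    field_simp
  have hΦD : Φ ≤ s * (1 - 1/γ - ε) + Δ := by
    have h1 := hnum q (Φ / s) (by
      rw [div_le_iff₀ hs0]
      refine hΦα.trans ?_
      have := mul_le_mul_of_nonneg_left hαμ (show 0 ≤ ρ * s by positivity)
      linarith) (by rw [div_le_iff₀ hs0]; linarith)
    rw [div_le_iff₀ hs0] at h1
    linarith
  have hgoal : Φ + A - s ≤ Δ := by
    by_cases hcase : Φ ≤ Δ
    · have h1 := (e_partD (e := e) (c := 0) hF hN hγ1 d4 hNs).2 he0 d1 d2 le_rfl hs0.le (by
        rw [zero_mul, zero_mul]; exact mul_nonneg (by linarith) hs0.le)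
      rw [← hc, ← hA, zero_mul] at h1
      linarith
    · push Not at hcase
      have hαp : 0 < α := by
        rcases hα0.eq_or_lt with h | h
        · rw [← h, mul_zero] at hΦα; linarith
        · exact h
      have hcα : (Φ - Δ)/α * α = Φ - Δ := div_mul_cancel₀ _ hαp.ne'
      have h1 := (e_partD (e := e) (c := (Φ - Δ)/α) hF hN hγ1 d4 hNs).2 he0 d1 d2
        (div_nonneg (by linarith) hα0) (by
          rw [div_le_iff₀ hαp]
          have := mul_le_mul_of_nonneg_right hρ1 (mul_nonneg hs0.le hα0)
          linarith) (by
          rw [← hc, ← hα, hcα]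
          have h3 : (Φ - Δ) * γ ≤ (s * (1 - 1/γ - ε)) * γ := mul_le_mul_of_nonneg_right (by linarith) hg0.le
          have h4 : (s * (1 - 1/γ - ε)) * γ = (γ - 1 - e) * s := by
            have hgg : 1/γ * γ = 1 := div_mul_cancel₀ _ hg0.ne'
            rw [he]
            linear_combination (-(s:ℝ)) * hgg
          linarith)
      rw [← hc, ← hA, ← hα, hcα] at h1
      linarith
  have hfin := mul_le_mul_of_nonneg_right hgoal cpos.le
  rw [hΦc, hAc] at hcount
  linarith

theorem e_nomat {F : Finset (Finset ℕ)} {s k : ℕ} (hk : ∀ A ∈ F, #A = k) (hk0 : 0 < k)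
    (h : matchingNumber F ≤ s) : ENoMat F s := by
  rintro ⟨f, hf, hd⟩
  have hinj : Function.Injective f := by
    intro p r hpr
    by_contra hne
    have h1 := hd p r hne
    rw [hpr, disjoint_self_iff_empty] at h1
    have := hk _ (hf r)
    rw [h1] at this
    simp at this
    omega
  have : s + 1 ≤ matchingNumber F := by
    apply le_csSup
    · refine ⟨#F, ?_⟩
      rintro t ⟨M, hM, _, rfl⟩
      exact card_le_card hM
    · refine ⟨univ.image f, ?_, ?_, ?_⟩
      · intro A hA
        obtain ⟨p, _, rfl⟩ := mem_image.mp hA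
        exact hf p
      · intro A hA B hB hAB
        simp only [coe_image, coe_univ, Set.image_univ, Set.mem_range] at hA hB
        obtain ⟨p, rfl⟩ := hA
        obtain ⟨r, rfl⟩ := hB
        exact hd p r (fun h => hAB (by rw [h]))
      · rw [card_image_of_injective _ hinj]; simp
  omega

theorem e_max (n k s : ℕ) : ∃ F : Finset (Finset ℕ), F ⊆ (Finset.range n).powersetCard k ∧
    matchingNumber F ≤ s ∧ F.card = maxSizeEMC n k s := by
  have := Nat.sSup_mem (s := {t : ℕ | ∃ F : Finset (Finset ℕ), F ⊆ (Finset.range n).powersetCard k ∧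
    matchingNumber F ≤ s ∧ F.card = t}) ?_ ?_
  · exact this
  · refine ⟨0, ∅, by simp, ?_, by simp⟩
    unfold matchingNumber
    apply csSup_le'
    rintro t ⟨M, hM, _, rfl⟩
    simp [subset_empty.mp hM]
  · refine ⟨#((Finset.range n).powersetCard k), ?_⟩
    rintro t ⟨F, hF, _, rfl⟩
    exact card_le_card hF

theorem erdos_matching_universal_bound (γ : ℝ) (hγ1 : 1 < γ) (hγ2 : γ ≤ 5 / 3) :
    ∃ s₀ : ℕ, ∀ s k n : ℕ, s₀ ≤ s → 2 ≤ k →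
      γ * s * k - (γ - 1) * s ≤ (n : ℝ) →
      (maxSizeEMC n k s : ℝ) ≤
        (n.choose k : ℝ) -
          (γ - 1) / 2 * ((5 * k - 2) / (γ * k - (γ - 1))) * ((n - s).choose k : ℝ) := by
  obtain ⟨s₀, h0⟩ := e_core hγ1 hγ2
  refine ⟨max s₀ 1, ?_⟩
  intro s k n hs hk hn
  obtain ⟨q, rfl⟩ : ∃ q, k = q + 2 := ⟨k - 2, by omega⟩
  have hs1 : 1 ≤ s := (le_max_right _ _).trans hs
  have hs1' : (1:ℝ) ≤ s := by exact_mod_cast hs1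
  have hq0 : (0:ℝ) ≤ q := Nat.cast_nonneg q
  push_cast at hn
  have hn2 : γ * s * (q+1) ≤ n - s := by linarith
  have hns : s + 1 ≤ n := by
    have h1 : (1:ℝ) ≤ γ * s := by nlinarith
    have : (s:ℝ) + 1 ≤ n := by nlinarith
    exact_mod_cast this
  obtain ⟨N, rfl⟩ : ∃ N, n = N + (s+1) := ⟨n - (s+1), by omega⟩
  obtain ⟨F, hF, hm, hcard⟩ := e_max (N + (s+1)) (q+2) s
  obtain ⟨F', a1, a2, a3, a4⟩ := e_exists_shifted F hF
    (e_nomat (fun A hA => (mem_powersetCard.mp (hF hA)).2) (by omega) hm)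
  have := h0 F' s N q ((le_max_left _ _).trans hs) a4 a2 a1 (by push_cast at hn2; linarith)
  rw [a3, hcard] at this
  rw [show N + (s+1) - s = N + 1 by omega]
  push_cast
  exact this
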